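/- Let d ≥ 1, D := {1,...,d} and let B ⊆ D be nonempty. There is a constant C depending only on d such that for every measurable f : I^d → ℝ with ∫_{I^d} |f| log^{|B|}(1+|f|) < ∞ and every n = (n_1,...,n_d) with each n_j ≥ 2, one has ‖(L_{n_B}∘R_{n_{B'}})(f)‖_{L^1(I^d)} ≤ C (1 + ∫_{I^d} |f| log^{|B|}(1+|f|)). -/

import Mathlib

open MeasureTheory Filter

noncomputable section

/-- The unit cube `[0,1)^d`. -/
def unitCube (d : ℕ) : Set (Fin d → ℝ) := Set.univ.pi fun _ => Set.Ico (0:ℝ) 1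

/-- Lebesgue measure restricted to the unit cube `[0,1)^d`. -/
def cubeMeasure (d : ℕ) : Measure (Fin d → ℝ) := volume.restrict (unitCube d)

/-- The `1`-periodic function equal to `1` on `[0,1/2)` and to `-1` on `[1/2,1)`. -/
def r0 (x : ℝ) : ℝ := if Int.fract x < 1/2 then 1 else -1

/-- The Rademacher functions. -/
def rademacher (n : ℕ) (x : ℝ) : ℝ := r0 (2 ^ n * x)

/-- The Walsh functions (in Paley enumeration, via binary digits). -/
def walsh (n : ℕ) (x : ℝ) : ℝ :=
  ∏ k ∈ Finset.range (n + 1), if n.testBit k then rademacher k x else 1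

/-- The Walsh–Dirichlet kernel `D_n`. -/
def dirichletKernel (n : ℕ) (x : ℝ) : ℝ := ∑ k ∈ Finset.range n, walsh k x

/-- `l_n = ∑_{k=1}^{n-1} 1/k`. -/
def logSum (n : ℕ) : ℝ := ∑ k ∈ Finset.Icc 1 (n - 1), (1 : ℝ) / k

/-- The Nörlund logarithmic kernel `F_n`. -/
def FKernel (n : ℕ) (u : ℝ) : ℝ :=
  (1 / logSum n) * ∑ i ∈ Finset.Ico 1 n, dirichletKernel (n - i) u / i

/-- The Riesz logarithmic kernel `G_n`. -/
def GKernel (n : ℕ) (u : ℝ) : ℝ :=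
  (1 / logSum n) * ∑ i ∈ Finset.Ico 1 n, dirichletKernel i u / i

/-- Walsh–Fourier coefficient of `f` on the unit cube. -/
def walshCoef {d : ℕ} (f : (Fin d → ℝ) → ℝ) (j : Fin d → ℕ) : ℝ :=
  ∫ x, f x * ∏ i, walsh (j i) (x i) ∂(cubeMeasure d)

/-- Rectangular partial sums of the multiple Walsh–Fourier series. -/
def rectPartialSum {d : ℕ} (f : (Fin d → ℝ) → ℝ) (N : Fin d → ℕ) (x : Fin d → ℝ) : ℝ :=
  ∑ j ∈ Fintype.piFinset (fun i => Finset.range (N i)),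
    walshCoef f j * ∏ i, walsh (j i) (x i)

/-- The mixed logarithmic means `(L_{n_B} ∘ R_{n_{B'}})(f)`. -/
def mixedLogMean {d : ℕ} (B : Finset (Fin d)) (f : (Fin d → ℝ) → ℝ)
    (n : Fin d → ℕ) (x : Fin d → ℝ) : ℝ :=
  (∏ j, logSum (n j))⁻¹ *
    ∑ i ∈ Fintype.piFinset (fun j => Finset.Ico 1 (n j)),
      rectPartialSum f (fun j => if j ∈ B then n j - i j else i j) x / ∏ j, (i j : ℝ)

/-- A Young function: convex, continuous, even, vanishing at `0`, with
`Q(u)/u → ∞` at `+∞` and `Q(u)/u → 0` at `0`. -/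
structure YoungFunction where
  toFun : ℝ → ℝ
  nonneg : ∀ u, 0 ≤ toFun u
  convexOn : ConvexOn ℝ Set.univ toFun
  continuous : Continuous toFun
  even : ∀ u, toFun (-u) = toFun u
  map_zero : toFun 0 = 0
  tendsto_atTop : Tendsto (fun u => toFun u / u) atTop atTop
  tendsto_zero : Tendsto (fun u => toFun u / u) (nhdsWithin 0 {(0:ℝ)}ᶜ) (nhds 0)

/-- The set of admissible constants `k` in the Luxemburg norm of `f`. -/
def orliczSet {d : ℕ} (Q : YoungFunction) (f : (Fin d → ℝ) → ℝ) : Set ℝ :=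
  {k | 0 < k ∧ Integrable (fun x => Q.toFun (|f x| / k)) (cubeMeasure d) ∧
    ∫ x, Q.toFun (|f x| / k) ∂(cubeMeasure d) ≤ 1}

/-- `f` belongs to the Orlicz space `L_Q(I^d)`. -/
def MemOrlicz {d : ℕ} (Q : YoungFunction) (f : (Fin d → ℝ) → ℝ) : Prop :=
  Measurable f ∧ (orliczSet Q f).Nonempty

/-- The Luxemburg norm on the Orlicz space `L_Q(I^d)`. -/
def orliczNorm {d : ℕ} (Q : YoungFunction) (f : (Fin d → ℝ) → ℝ) : ℝ :=
  sInf (orliczSet Q f)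

/-- `p_n = 2^{2n} + 2^{2n-2} + ⋯ + 2^0`. -/
def pIdx (n : ℕ) : ℕ := ∑ k ∈ Finset.range (n + 1), 4 ^ k

/-- `m̃ = ⌊ l_{p_{⌊m/2⌋}-1}/16 - 2^15 ⌋`. -/
def mTilde (m : ℕ) : ℤ := ⌊logSum (pIdx (m / 2) - 1) / 16 - 2 ^ 15⌋

/-- `m₀ = min{m : m̃ > 1}`. -/
def m₀ : ℕ := sInf {m : ℕ | 1 < mTilde m}

/-- The set `Ω_n`. -/
def Omega (n : ℕ) : Set ℝ :=
  ⋃ m ∈ Finset.Icc n (2 * n),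
    Set.Ico ((2:ℝ) ^ (-(m:ℤ) - 1) + (2:ℝ) ^ (-(m:ℤ) - mTilde m)) ((2:ℝ) ^ (-(m:ℤ)))

/-- `k`-th binary digit of `x` (the expansion not terminating in `1`'s). -/
def binDigit (k : ℕ) (x : ℝ) : ℕ := (⌊x * 2 ^ (k + 1)⌋).toNat % 2

/-- Dyadic addition on `[0,1)`. -/
def dyadicAdd (x t : ℝ) : ℝ :=
  ∑' k : ℕ, |(binDigit k x : ℝ) - (binDigit k t : ℝ)| / 2 ^ (k + 1)

/-- Dyadic convolution `f ∗ K` on `[0,1)`. -/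
def dyadicConv (f K : ℝ → ℝ) (x : ℝ) : ℝ :=
  ∫ t in Set.Ico (0:ℝ) 1, f t * K (dyadicAdd x t)

/-- Lebesgue measure restricted to `[0,1)`. -/
def unitMeasure : Measure ℝ := volume.restrict (Set.Ico (0:ℝ) 1)

/-- A set `A ⊆ L_Q(I^d)` is nowhere dense w.r.t. the Luxemburg norm. -/
def OrliczNowhereDense {d : ℕ} (Q : YoungFunction) (A : Set ((Fin d → ℝ) → ℝ)) : Prop :=
  ∀ f, MemOrlicz Q f → ∀ ε > 0, ∃ g, MemOrlicz Q g ∧ ∃ δ > 0,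
    (∀ h, MemOrlicz Q h → orliczNorm Q (h - g) < δ → orliczNorm Q (h - f) < ε) ∧
    (∀ h, MemOrlicz Q h → orliczNorm Q (h - g) < δ → h ∉ A)

/-- A set `A ⊆ L_Q(I^d)` is of first Baire category (meager) w.r.t. the Luxemburg norm. -/
def OrliczMeager {d : ℕ} (Q : YoungFunction) (A : Set ((Fin d → ℝ) → ℝ)) : Prop :=
  ∃ F : ℕ → Set ((Fin d → ℝ) → ℝ), (∀ k, OrliczNowhereDense Q (F k)) ∧ A ⊆ ⋃ k, F k

/-!
On the dyadic cubes of side `2^(-M)` with `n_j ≤ 2^M`, the mixed mean is a tensor product of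
one-dimensional matrices applied to the averages of `f` over the cubes.

* The Riesz logarithmic means have kernels bounded in `L¹`, by summation by parts and the `L¹` bound
  for the Walsh–Fejér kernels, hence they are bounded on `ℓ^p` uniformly in `p`.
* The Nörlund logarithmic means are convex combinations of partial sums `S_N`. As
  `w_N S_N (w_N ·)` is a martingale transform, Burkholder's weak-type function bounds `S_N` on `ℓ^p`
  by `12 / (p - 1)` for `1 < p < 2`.

So the tensor product has norm at most `12^d / (p - 1)^|B|` on `ℓ^p`. Yano's extrapolation turns
this blow-up as `p → 1` into the `L log^|B| L → L¹` bound on the cube averages, and Jensen's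
inequality for the convex function `|x| log^|B| (1 + |x|)` passes from the averages to `f`.
-/

/-! ### Burkholder's functions -/

section Burkholder

/-- Burkholder's weak-type function: zigzag-concave on the plane and nonpositive on the
axis `y = 0`, so that its expectation at a martingale and its transform is nonpositive. -/
def weakBurkholder (x y : ℝ) : ℝ := if |x| + |y| < 1 then y ^ 2 - x ^ 2 else 1 - 2 * |x|

lemma weakBurkholder_of_lt {x y : ℝ} (h : |x| + |y| < 1) : weakBurkholder x y = y ^ 2 - x ^ 2 :=
  if_pos h

lemma weakBurkholder_of_le {x y : ℝ} (h : 1 ≤ |x| + |y|) : weakBurkholder x y = 1 - 2 * |x| :=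
  if_neg h.not_gt

lemma weakBurkholder_le (x y : ℝ) : weakBurkholder x y ≤ 1 - 2 * |x| := by
  rcases lt_or_ge (|x| + |y|) 1 with h | h
  · rw [weakBurkholder_of_lt h]
    have : |y| ^ 2 ≤ (1 - |x|) ^ 2 := pow_le_pow_left₀ (abs_nonneg y) (by linarith) 2
    nlinarith [sq_abs x, sq_abs y]
  · exact (weakBurkholder_of_le h).le

lemma weakBurkholder_zero_right_nonpos (x : ℝ) : weakBurkholder x 0 ≤ 0 := by
  rcases lt_or_ge (|x| + |0|) 1 with h | h
  · rw [weakBurkholder_of_lt h]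
    nlinarith [sq_nonneg x]
  · rw [weakBurkholder_of_le h]
    rw [abs_zero] at h
    linarith

lemma sq_one_sub_abs_add_le {x y h k : ℝ} (hxy : |x| + |y| < 1)
    (hxyhk : 1 ≤ |x + h| + |y + k|) (hk : |k| ≤ |h|) :
    (1 - |x + h|) ^ 2 ≤ (y + k) ^ 2 + h ^ 2 - k ^ 2 := by
  rcases le_or_gt |x + h| 1 with habs | habs
  · have : (1 - |x + h|) ^ 2 ≤ |y + k| ^ 2 := pow_le_pow_left₀ (by linarith) (by linarith) 2
    linarith [sq_le_sq.mpr hk, sq_abs (y + k)]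
  · have hsq : (|x + h| - 1) ^ 2 ≤ (|h| - |y|) ^ 2 :=
      pow_le_pow_left₀ (by linarith) (by linarith [abs_add_le x h]) 2
    have hyk : -(|y| * |h|) ≤ y * k := by
      have hle := mul_le_mul_of_nonneg_left hk (abs_nonneg y)
      rw [← abs_mul] at hle
      linarith [neg_abs_le (y * k)]
    nlinarith [sq_abs h, sq_abs y]

lemma weakBurkholder_add_le_of_lt {x y h k : ℝ} (hxy : |x| + |y| < 1) (hk : |k| ≤ |h|) :
    weakBurkholder (x + h) (y + k) ≤ weakBurkholder x y + -2 * x * h + 2 * y * k := by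
  rw [weakBurkholder_of_lt hxy]
  rcases lt_or_ge (|x + h| + |y + k|) 1 with hnorm | hnorm
  · rw [weakBurkholder_of_lt hnorm]
    linarith [sq_le_sq.mpr hk]
  · rw [weakBurkholder_of_le hnorm]
    nlinarith [sq_one_sub_abs_add_le hxy hnorm hk, sq_abs (x + h)]

lemma exists_weakBurkholder_add_le (x y : ℝ) : ∃ A B : ℝ, ∀ h k : ℝ, |k| ≤ |h| →
    weakBurkholder (x + h) (y + k) ≤ weakBurkholder x y + A * h + B * k := by
  rcases lt_or_ge (|x| + |y|) 1 with hxy | hxy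
  · exact ⟨-2 * x, 2 * y, fun h k hk => weakBurkholder_add_le_of_lt hxy hk⟩
  rw [weakBurkholder_of_le hxy]
  rcases le_total 0 x with hx | hx
  · refine ⟨-2, 0, fun h k _ => ?_⟩
    rw [abs_of_nonneg hx]
    linarith [weakBurkholder_le (x + h) (y + k), le_abs_self (x + h)]
  · refine ⟨2, 0, fun h k _ => ?_⟩
    rw [abs_of_nonpos hx]
    linarith [weakBurkholder_le (x + h) (y + k), neg_abs_le (x + h)]

lemma weakBurkholder_zigzag {h k : ℝ} (x y : ℝ) (hk : |k| ≤ |h|) :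
    weakBurkholder (x + h) (y + k) + weakBurkholder (x - h) (y - k) ≤
      2 * weakBurkholder x y := by
  obtain ⟨A, B, hle⟩ := exists_weakBurkholder_add_le x y
  have hpos := hle h k hk
  have hneg := hle (-h) (-k) (by rwa [abs_neg, abs_neg])
  rw [← sub_eq_add_neg, ← sub_eq_add_neg] at hneg
  linarith

/-- Burkholder's strong-type function for `1 < p ≤ 2`, up to a positive multiplicative constant:
the mixture over the scales `t` of the weak-type function of `(x / t, y / t)`. -/
def strongBurkholder (p x y : ℝ) : ℝ := (|x| + |y|) ^ (p - 1) * (|y| - |x| / (p - 1))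

variable {p x y t : ℝ}

lemma abs_div_add_abs_div (x y : ℝ) (ht : 0 < t) : |x / t| + |y / t| = (|x| + |y|) / t := by
  rw [abs_div, abs_div, abs_of_pos ht, add_div]

lemma rpow_mul_weakBurkholder_div_of_le (p : ℝ) (ht : 0 < t) (h : t ≤ |x| + |y|) :
    t ^ (p - 1) * weakBurkholder (x / t) (y / t) = t ^ (p - 1) - 2 * |x| * t ^ (p - 2) := by
  have hnorm : 1 ≤ |x / t| + |y / t| := by rwa [abs_div_add_abs_div x y ht, one_le_div ht]
  have hpow : t ^ (p - 1) = t ^ (p - 2) * t := by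
    rw [← Real.rpow_add_one ht.ne']
    ring_nf
  rw [weakBurkholder_of_le hnorm, abs_div, abs_of_pos ht, hpow]
  field_simp

lemma rpow_mul_weakBurkholder_div_of_lt (p : ℝ) (h : |x| + |y| < t) :
    t ^ (p - 1) * weakBurkholder (x / t) (y / t) = (y ^ 2 - x ^ 2) * t ^ (p - 3) := by
  have ht : 0 < t := (add_nonneg (abs_nonneg x) (abs_nonneg y)).trans_lt h
  have hnorm : |x / t| + |y / t| < 1 := by rwa [abs_div_add_abs_div x y ht, div_lt_one ht]
  have hpow : t ^ (p - 1) = t ^ (p - 3) * t ^ 2 := by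
    rw [← Real.rpow_add_natCast ht.ne']
    ring_nf
  rw [weakBurkholder_of_lt hnorm, hpow]
  field_simp

lemma integrableOn_rpow_mul_weakBurkholder_Ioc (hp : 1 < p) :
    IntegrableOn (fun t : ℝ => t ^ (p - 1) * weakBurkholder (x / t) (y / t))
      (Set.Ioc 0 (|x| + |y|)) := by
  have hint : IntervalIntegrable (fun t : ℝ => t ^ (p - 1) - 2 * |x| * t ^ (p - 2)) volume
      0 (|x| + |y|) :=
    (intervalIntegral.intervalIntegrable_rpow' (by linarith)).sub
      ((intervalIntegral.intervalIntegrable_rpow' (by linarith)).const_mul _)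
  rw [intervalIntegrable_iff_integrableOn_Ioc_of_le (by positivity)] at hint
  exact hint.congr_fun (fun t ht => (rpow_mul_weakBurkholder_div_of_le p ht.1 ht.2).symm)
    measurableSet_Ioc

lemma integrableOn_rpow_mul_weakBurkholder_Ioi (hp : p < 2) (hxy : 0 < |x| + |y|) :
    IntegrableOn (fun t : ℝ => t ^ (p - 1) * weakBurkholder (x / t) (y / t))
      (Set.Ioi (|x| + |y|)) := by
  have hint : IntegrableOn (fun t : ℝ => (y ^ 2 - x ^ 2) * t ^ (p - 3)) (Set.Ioi (|x| + |y|)) :=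
    (integrableOn_Ioi_rpow_of_lt (by linarith) hxy).const_mul _
  exact hint.congr_fun (fun t ht => (rpow_mul_weakBurkholder_div_of_lt p ht).symm)
    measurableSet_Ioi

lemma integrableOn_rpow_mul_weakBurkholder (hp₁ : 1 < p) (hp₂ : p < 2) (x y : ℝ) :
    IntegrableOn (fun t : ℝ => t ^ (p - 1) * weakBurkholder (x / t) (y / t)) (Set.Ioi 0) := by
  have hxy : 0 ≤ |x| + |y| := by positivity
  rcases hxy.eq_or_lt with hzero | hpos
  · obtain ⟨hx, hy⟩ := (add_eq_zero_iff_of_nonneg (abs_nonneg x) (abs_nonneg y)).mp hzero.symm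
    simp [abs_eq_zero.mp hx, abs_eq_zero.mp hy, weakBurkholder]
  · rw [← Set.Ioc_union_Ioi_eq_Ioi hxy]
    exact (integrableOn_rpow_mul_weakBurkholder_Ioc hp₁).union
      (integrableOn_rpow_mul_weakBurkholder_Ioi hp₂ hpos)

lemma integral_Ioc_rpow_mul_weakBurkholder (hp : 1 < p) :
    ∫ t in Set.Ioc 0 (|x| + |y|), t ^ (p - 1) * weakBurkholder (x / t) (y / t) =
      (|x| + |y|) ^ p / p - 2 * |x| * ((|x| + |y|) ^ (p - 1) / (p - 1)) := by
  rw [setIntegral_congr_fun measurableSet_Ioc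
      (fun t ht => rpow_mul_weakBurkholder_div_of_le p ht.1 ht.2),
    ← intervalIntegral.integral_of_le (by positivity),
    intervalIntegral.integral_sub (intervalIntegral.intervalIntegrable_rpow' (by linarith))
      ((intervalIntegral.intervalIntegrable_rpow' (by linarith)).const_mul _),
    intervalIntegral.integral_const_mul, integral_rpow (Or.inl (by linarith)),
    integral_rpow (Or.inl (by linarith)), Real.zero_rpow (by linarith),
    Real.zero_rpow (by linarith), sub_zero, sub_zero]
  ring_nf

lemma integral_Ioi_rpow_mul_weakBurkholder (hp : p < 2) (hxy : 0 < |x| + |y|) :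
    ∫ t in Set.Ioi (|x| + |y|), t ^ (p - 1) * weakBurkholder (x / t) (y / t) =
      (y ^ 2 - x ^ 2) * ((|x| + |y|) ^ (p - 2) / (2 - p)) := by
  rw [setIntegral_congr_fun measurableSet_Ioi
      (fun t ht => rpow_mul_weakBurkholder_div_of_lt p ht),
    integral_const_mul, integral_Ioi_rpow_of_lt (by linarith) hxy,
    show p - 3 + 1 = -(2 - p) by ring, show p - 2 = -(2 - p) by ring, neg_div_neg_eq]

lemma integral_rpow_mul_weakBurkholder (hp₁ : 1 < p) (hp₂ : p < 2) (x y : ℝ) :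
    ∫ t in Set.Ioi (0 : ℝ), t ^ (p - 1) * weakBurkholder (x / t) (y / t) =
      2 / (p * (2 - p)) * strongBurkholder p x y := by
  have hxy : 0 ≤ |x| + |y| := by positivity
  rcases hxy.eq_or_lt with hzero | hpos
  · obtain ⟨hx, hy⟩ := (add_eq_zero_iff_of_nonneg (abs_nonneg x) (abs_nonneg y)).mp hzero.symm
    simp [abs_eq_zero.mp hx, abs_eq_zero.mp hy, weakBurkholder, strongBurkholder]
  rw [← Set.Ioc_union_Ioi_eq_Ioi hxy, setIntegral_union (Set.Ioc_disjoint_Ioi le_rfl)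
      measurableSet_Ioi (integrableOn_rpow_mul_weakBurkholder_Ioc hp₁)
      (integrableOn_rpow_mul_weakBurkholder_Ioi hp₂ hpos),
    integral_Ioc_rpow_mul_weakBurkholder hp₁, integral_Ioi_rpow_mul_weakBurkholder hp₂ hpos,
    strongBurkholder]
  have hsq : y ^ 2 - x ^ 2 = (|x| + |y|) * (|y| - |x|) := by
    rw [← sq_abs y, ← sq_abs x]
    ring
  have hpow₁ : (|x| + |y|) ^ (p - 1) = (|x| + |y|) ^ (p - 2) * (|x| + |y|) := by
    rw [← Real.rpow_add_one hpos.ne']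
    ring_nf
  have hpow₂ : (|x| + |y|) ^ p = (|x| + |y|) ^ (p - 2) * (|x| + |y|) ^ 2 := by
    rw [← Real.rpow_add_natCast hpos.ne']
    ring_nf
  have hp_sub_one : p - 1 ≠ 0 := by linarith
  have htwo_sub_p : 2 - p ≠ 0 := by linarith
  have hp_ne : p ≠ 0 := by linarith
  rw [hsq, hpow₁, hpow₂]
  field_simp
  ring

lemma abs_rpow_div_two_le_of_two_mul_div_le (hp : 1 < p) (h : 2 * |x| / (p - 1) ≤ |y|) :
    |y| ^ p / 2 ≤ strongBurkholder p x y := by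
  have hp0 : 0 < p - 1 := by linarith
  have hhalf : |y| / 2 ≤ |y| - |x| / (p - 1) := by
    rw [mul_div_assoc] at h
    linarith
  calc |y| ^ p / 2 = |y| ^ (p - 1) * (|y| / 2) := by
        rw [Real.rpow_sub_one' (abs_nonneg y) hp0.ne']
        rcases eq_or_ne |y| 0 with hy | hy
        · simp [hy, Real.zero_rpow (by linarith : p ≠ 0)]
        · field_simp
    _ ≤ strongBurkholder p x y := by
        unfold strongBurkholder
        gcongr
        linarith [abs_nonneg x]

lemma abs_rpow_div_two_le_of_lt_two_mul_div (hp₁ : 1 < p) (hp₂ : p ≤ 2)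
    (h : |y| < 2 * |x| / (p - 1)) :
    |y| ^ p / 2 ≤ strongBurkholder p x y + 2 * (3 * |x| / (p - 1)) ^ p := by
  have hp0 : 0 < p - 1 := by linarith
  have hx : |x| ≤ |x| / (p - 1) := le_div_self (abs_nonneg x) hp0 (by linarith)
  have hthree : 3 * |x| / (p - 1) = |x| / (p - 1) + 2 * |x| / (p - 1) := by ring
  have hxp : 0 ≤ |x| / (p - 1) := by positivity
  have hneg : (|x| + |y|) ^ (p - 1) * (|x| / (p - 1)) ≤ (3 * |x| / (p - 1)) ^ p := by
    calc (|x| + |y|) ^ (p - 1) * (|x| / (p - 1))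
        ≤ (3 * |x| / (p - 1)) ^ (p - 1) * (3 * |x| / (p - 1)) := by
          gcongr
          · linarith
          · linarith [abs_nonneg x]
      _ = (3 * |x| / (p - 1)) ^ p := by
          rw [← Real.rpow_add_one' (by positivity) (by linarith), sub_add_cancel]
  have hyp : |y| ^ p ≤ (3 * |x| / (p - 1)) ^ p := by
    gcongr
    linarith
  have hpos : 0 ≤ (|x| + |y|) ^ (p - 1) * |y| := by positivity
  have hyp0 : 0 ≤ |y| ^ p := by positivity
  rw [strongBurkholder, mul_sub]
  linarith

lemma abs_rpow_div_two_le (hp₁ : 1 < p) (hp₂ : p ≤ 2) (x y : ℝ) :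
    |y| ^ p / 2 ≤ strongBurkholder p x y + 2 * (3 * |x| / (p - 1)) ^ p := by
  rcases le_or_gt (2 * |x| / (p - 1)) |y| with h | h
  · have hnonneg : 0 ≤ (3 * |x| / (p - 1)) ^ p :=
      Real.rpow_nonneg (div_nonneg (by positivity) (by linarith)) p
    linarith [abs_rpow_div_two_le_of_two_mul_div_le hp₁ h]
  · exact abs_rpow_div_two_le_of_lt_two_mul_div hp₁ hp₂ h

variable {ι : Type*} {s : Finset ι} {f g : ι → ℝ}

lemma sum_strongBurkholder_nonpos
    (h : ∀ t : ℝ, 0 < t → ∑ i ∈ s, weakBurkholder (f i / t) (g i / t) ≤ 0)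
    (hp₁ : 1 < p) (hp₂ : p < 2) : ∑ i ∈ s, strongBurkholder p (f i) (g i) ≤ 0 := by
  have hpos : 0 < 2 / (p * (2 - p)) := div_pos two_pos (mul_pos (by linarith) (by linarith))
  suffices 2 / (p * (2 - p)) * ∑ i ∈ s, strongBurkholder p (f i) (g i) ≤ 0 from
    nonpos_of_mul_nonpos_right this hpos
  simp only [Finset.mul_sum, ← integral_rpow_mul_weakBurkholder hp₁ hp₂]
  rw [← integral_finsetSum s fun i _ => integrableOn_rpow_mul_weakBurkholder hp₁ hp₂ (f i) (g i)]
  refine setIntegral_nonpos measurableSet_Ioi fun t ht => ?_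
  rw [← Finset.mul_sum]
  exact mul_nonpos_of_nonneg_of_nonpos (Real.rpow_nonneg (le_of_lt ht) _) (h t ht)

lemma four_mul_three_mul_div_rpow_le (hp : 1 < p) (x : ℝ) :
    4 * (3 * |x| / (p - 1)) ^ p ≤ (12 / (p - 1)) ^ p * |x| ^ p := by
  have hp0 : 0 < p - 1 := by linarith
  calc 4 * (3 * |x| / (p - 1)) ^ p ≤ 4 ^ p * (3 * |x| / (p - 1)) ^ p := by
        gcongr
        exact Real.self_le_rpow_of_one_le (by norm_num) hp.le
    _ = (12 / (p - 1)) ^ p * |x| ^ p := by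
        rw [← Real.mul_rpow (by norm_num) (by positivity),
          ← Real.mul_rpow (by positivity) (by positivity)]
        ring_nf

theorem sum_abs_rpow_le_of_sum_weakBurkholder_nonpos
    (h : ∀ t : ℝ, 0 < t → ∑ i ∈ s, weakBurkholder (f i / t) (g i / t) ≤ 0)
    (hp₁ : 1 < p) (hp₂ : p < 2) :
    ∑ i ∈ s, |g i| ^ p ≤ (12 / (p - 1)) ^ p * ∑ i ∈ s, |f i| ^ p := by
  have hle : ∑ i ∈ s, |g i| ^ p / 2 ≤
      ∑ i ∈ s, (strongBurkholder p (f i) (g i) + 2 * (3 * |f i| / (p - 1)) ^ p) :=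
    Finset.sum_le_sum fun i _ => abs_rpow_div_two_le hp₁ hp₂.le (f i) (g i)
  have hf := Finset.sum_le_sum fun i (_ : i ∈ s) => four_mul_three_mul_div_rpow_le hp₁ (f i)
  rw [Finset.sum_add_distrib, ← Finset.sum_div, ← Finset.mul_sum] at hle
  rw [← Finset.mul_sum, ← Finset.mul_sum] at hf
  linarith [sum_strongBurkholder_nonpos h hp₁ hp₂]

end Burkholder

/-! ### `ℓ^p` bounds for finite matrices -/

open scoped Matrix

section LpBound

variable {α β : Type*} {p C C' : ℝ}

/-- The tensor product of a finite family of matrices. -/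
def tensorMatrix {ι : Type*} [Fintype ι] (K : ι → Matrix α β ℝ) : Matrix (ι → α) (ι → β) ℝ :=
  .of fun a b => ∏ j, K j (a j) (b j)

lemma tensorMatrix_sum_smul {ι κ : Type*} [Fintype ι] [DecidableEq ι] (s : ι → Finset κ)
    (w : ι → κ → ℝ) (K : ι → κ → Matrix α β ℝ) :
    tensorMatrix (fun j => ∑ i ∈ s j, w j i • K j i) =
      ∑ i ∈ Fintype.piFinset s, (∏ j, w j (i j)) • tensorMatrix fun j => K j (i j) := by
  ext a b
  simp only [tensorMatrix, Matrix.of_apply, Matrix.sum_apply, Matrix.smul_apply, smul_eq_mul,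
    Finset.prod_univ_sum, Finset.prod_mul_distrib]

variable [Fintype β]

lemma sum_fin_cons {d : ℕ} (F : (Fin (d + 1) → β) → ℝ) :
    ∑ b, F b = ∑ y, ∑ b' : Fin d → β, F (Fin.cons y b') := by
  rw [← Fintype.sum_prod_type', ← (Fin.consEquiv fun _ : Fin (d + 1) => β).sum_comp]
  rfl

lemma tensorMatrix_mulVec_cons {d : ℕ} (K : Fin (d + 1) → Matrix α β ℝ)
    (g : (Fin (d + 1) → β) → ℝ) (x : α) (a : Fin d → α) :
    (tensorMatrix K *ᵥ g) (Fin.cons x a) =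
      (K 0 *ᵥ fun y => (tensorMatrix (fun j => K j.succ) *ᵥ fun b => g (Fin.cons y b)) a) x := by
  simp only [tensorMatrix, Matrix.mulVec, dotProduct, Matrix.of_apply, sum_fin_cons,
    Fin.prod_univ_succ, Fin.cons_zero, Fin.cons_succ, Finset.mul_sum, mul_assoc]

lemma abs_mulVec_rpow_le {K : Matrix α β ℝ} (hp : 1 ≤ p) (hrow : ∀ a, ∑ b, |K a b| ≤ C)
    (g : β → ℝ) (a : α) :
    |(K *ᵥ g) a| ^ p ≤ C ^ (p - 1) * ∑ b, |K a b| * |g b| ^ p := by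
  have hp0 : 0 < p := by linarith
  have hK0 : 0 ≤ ∑ b, |K a b| := Finset.sum_nonneg fun _ _ => abs_nonneg _
  have hKg0 : 0 ≤ ∑ b, |K a b| * |g b| ^ p := Finset.sum_nonneg fun _ _ => by positivity
  have habs : |(K *ᵥ g) a| ≤ ∑ b, |K a b| * |g b| := by
    simpa only [Matrix.mulVec, dotProduct, abs_mul] using
      Finset.abs_sum_le_sum_abs (fun b => K a b * g b) Finset.univ
  calc |(K *ᵥ g) a| ^ p
      ≤ ((∑ b, |K a b|) ^ (1 - p⁻¹) * (∑ b, |K a b| * |g b| ^ p) ^ p⁻¹) ^ p := by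
        gcongr
        exact habs.trans <| Real.inner_le_weight_mul_Lp_of_nonneg _ hp _ _
          (fun _ => abs_nonneg _) fun _ => abs_nonneg _
    _ = (∑ b, |K a b|) ^ (p - 1) * ∑ b, |K a b| * |g b| ^ p := by
        rw [Real.mul_rpow (by positivity) (by positivity), ← Real.rpow_mul hK0,
          Real.rpow_inv_rpow hKg0 hp0.ne', show (1 - p⁻¹) * p = p - 1 by field_simp]
    _ ≤ C ^ (p - 1) * ∑ b, |K a b| * |g b| ^ p := by
        gcongr
        exact hrow a

variable [Fintype α]

/-- The matrix `K` maps `ℓ^p(β)` to `ℓ^p(α)`, both with counting measure, with norm at most `C`. -/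
def LpBound (p C : ℝ) (K : Matrix α β ℝ) : Prop :=
  ∀ g : β → ℝ, ∑ a, |(K *ᵥ g) a| ^ p ≤ C ^ p * ∑ b, |g b| ^ p

lemma LpBound.mono {K : Matrix α β ℝ} (hK : LpBound p C K) (hp : 0 ≤ p) (hC : 0 ≤ C)
    (hCC' : C ≤ C') : LpBound p C' K := fun g =>
  (hK g).trans <| mul_le_mul_of_nonneg_right (Real.rpow_le_rpow hC hCC' hp)
    (Finset.sum_nonneg fun _ _ => Real.rpow_nonneg (abs_nonneg _) p)

lemma LpBound.of_sum_abs_le {K : Matrix α β ℝ} (hp : 1 ≤ p) (hC : 0 ≤ C)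
    (hrow : ∀ a, ∑ b, |K a b| ≤ C) (hcol : ∀ b, ∑ a, |K a b| ≤ C) : LpBound p C K := fun g =>
  calc ∑ a, |(K *ᵥ g) a| ^ p
      ≤ ∑ a, C ^ (p - 1) * ∑ b, |K a b| * |g b| ^ p :=
        Finset.sum_le_sum fun a _ => abs_mulVec_rpow_le hp hrow g a
    _ = C ^ (p - 1) * ∑ b, (∑ a, |K a b|) * |g b| ^ p := by
        rw [← Finset.mul_sum, Finset.sum_comm]
        simp only [Finset.sum_mul]
    _ ≤ C ^ (p - 1) * ∑ b, C * |g b| ^ p := by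
        gcongr with b
        exact hcol b
    _ = C ^ p * ∑ b, |g b| ^ p := by
        rw [← Finset.mul_sum, ← mul_assoc, ← Real.rpow_add_one' hC (by linarith), sub_add_cancel]

lemma LpBound.sum_smul {ι : Type*} {s : Finset ι} {w : ι → ℝ} {K : ι → Matrix α β ℝ}
    (hp : 1 ≤ p) (hw : ∀ i ∈ s, 0 ≤ w i) (hw₁ : ∑ i ∈ s, w i = 1)
    (hK : ∀ i ∈ s, LpBound p C (K i)) : LpBound p C (∑ i ∈ s, w i • K i) := fun g => by
  have hconvex (a : α) :
      |((∑ i ∈ s, w i • K i) *ᵥ g) a| ^ p ≤ ∑ i ∈ s, w i * |(K i *ᵥ g) a| ^ p := by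
    have habs : |((∑ i ∈ s, w i • K i) *ᵥ g) a| ≤ ∑ i ∈ s, w i * |(K i *ᵥ g) a| := by
      rw [Matrix.sum_mulVec, Finset.sum_apply]
      refine (Finset.abs_sum_le_sum_abs _ _).trans_eq (Finset.sum_congr rfl fun i hi => ?_)
      rw [Matrix.smul_mulVec, Pi.smul_apply, smul_eq_mul, abs_mul, abs_of_nonneg (hw i hi)]
    exact (Real.rpow_le_rpow (abs_nonneg _) habs (by linarith)).trans <|
      Real.rpow_arith_mean_le_arith_mean_rpow s w _ hw hw₁ (fun _ _ => abs_nonneg _) hp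
  calc ∑ a, |((∑ i ∈ s, w i • K i) *ᵥ g) a| ^ p
      ≤ ∑ a, ∑ i ∈ s, w i * |(K i *ᵥ g) a| ^ p := Finset.sum_le_sum fun a _ => hconvex a
    _ = ∑ i ∈ s, w i * ∑ a, |(K i *ᵥ g) a| ^ p := by
        rw [Finset.sum_comm]
        simp only [Finset.mul_sum]
    _ ≤ ∑ i ∈ s, w i * (C ^ p * ∑ b, |g b| ^ p) :=
        Finset.sum_le_sum fun i hi => mul_le_mul_of_nonneg_left (hK i hi g) (hw i hi)
    _ = C ^ p * ∑ b, |g b| ^ p := by rw [← Finset.sum_mul, hw₁, one_mul]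

lemma LpBound.tensorMatrix {d : ℕ} {c : Fin d → ℝ} {K : Fin d → Matrix α β ℝ}
    (hc : ∀ j, 0 ≤ c j) (hK : ∀ j, LpBound p (c j) (K j)) :
    LpBound p (∏ j, c j) (tensorMatrix K) := by
  induction d with
  | zero =>
    intro g
    simp [_root_.tensorMatrix, Matrix.mulVec, dotProduct]
  | succ d ih =>
    intro g
    let T : Matrix (Fin d → α) (Fin d → β) ℝ := _root_.tensorMatrix fun j => K j.succ
    have hT : LpBound p (∏ j : Fin d, c j.succ) T := ih (fun j => hc _) fun j => hK _
    have hc0 : 0 ≤ c 0 ^ p := Real.rpow_nonneg (hc 0) p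
    simp only [sum_fin_cons, Fin.prod_univ_succ, tensorMatrix_mulVec_cons]
    calc ∑ x, ∑ a, |(K 0 *ᵥ fun y => (T *ᵥ fun b => g (Fin.cons y b)) a) x| ^ p
        ≤ ∑ a, c 0 ^ p * ∑ y, |(T *ᵥ fun b => g (Fin.cons y b)) a| ^ p := by
          rw [Finset.sum_comm]
          exact Finset.sum_le_sum fun a _ => hK 0 _
      _ = c 0 ^ p * ∑ y, ∑ a, |(T *ᵥ fun b => g (Fin.cons y b)) a| ^ p := by
          rw [← Finset.mul_sum, Finset.sum_comm]
      _ ≤ c 0 ^ p * ∑ y, (∏ j : Fin d, c j.succ) ^ p * ∑ b, |g (Fin.cons y b)| ^ p := by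
          gcongr with y
          exact hT _
      _ = (c 0 * ∏ j : Fin d, c j.succ) ^ p * ∑ y, ∑ b, |g (Fin.cons y b)| ^ p := by
          rw [← Finset.mul_sum, ← mul_assoc,
            Real.mul_rpow (hc 0) (Finset.prod_nonneg fun j _ => hc _)]

end LpBound

/-! ### Yano extrapolation -/

section Yano

open scoped BigOperators

/-- The index of the exponential layer containing `u`, shifted so as to be at least `2`. -/
def expLevel (u : ℝ) : ℕ := ⌈Real.log (1 + |u|)⌉₊ + 2

lemma two_le_expLevel (u : ℝ) : 2 ≤ expLevel u := Nat.le_add_left 2 _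

lemma log_one_add_abs_nonneg (u : ℝ) : 0 ≤ Real.log (1 + |u|) :=
  Real.log_nonneg (by linarith [abs_nonneg u])

lemma abs_le_exp_expLevel (u : ℝ) : |u| ≤ Real.exp (expLevel u) := by
  have hlog : Real.log (1 + |u|) ≤ expLevel u := by
    rw [expLevel, Nat.cast_add, Nat.cast_ofNat]
    linarith [Nat.le_ceil (Real.log (1 + |u|))]
  rw [Real.log_le_iff_le_exp (by positivity)] at hlog
  linarith

lemma expLevel_le (u : ℝ) : (expLevel u : ℝ) ≤ Real.log (1 + |u|) + 3 := by
  rw [expLevel, Nat.cast_add, Nat.cast_ofNat]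
  linarith [Nat.ceil_lt_add_one (log_one_add_abs_nonneg u)]

lemma expLevel_pow_mul_abs_le (b : ℕ) (u : ℝ) :
    (expLevel u : ℝ) ^ b * |u| ≤ 6 ^ b * (1 + |u| * Real.log (1 + |u|) ^ b) := by
  have hlog0 := log_one_add_abs_nonneg u
  have hlevel := expLevel_le u
  rcases le_total |u| 1 with hu | hu
  · have hlog : Real.log (1 + |u|) ≤ |u| := by
      linarith [Real.log_le_sub_one_of_pos (by positivity : 0 < 1 + |u|)]
    calc (expLevel u : ℝ) ^ b * |u| ≤ 6 ^ b * 1 := by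
          gcongr
          linarith
      _ ≤ 6 ^ b * (1 + |u| * Real.log (1 + |u|) ^ b) := by
          gcongr
          exact le_add_of_nonneg_right (by positivity)
  · have hlog : Real.log 2 ≤ Real.log (1 + |u|) := Real.log_le_log two_pos (by linarith)
    calc (expLevel u : ℝ) ^ b * |u| ≤ (6 * Real.log (1 + |u|)) ^ b * |u| := by
          gcongr
          linarith [Real.log_two_gt_d9]
      _ = 6 ^ b * (|u| * Real.log (1 + |u|) ^ b) := by ring
      _ ≤ 6 ^ b * (1 + |u| * Real.log (1 + |u|) ^ b) := by
          gcongr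
          exact le_add_of_nonneg_left zero_le_one

variable {Y : Type*} {A : ℝ} {K : Matrix Y Y ℝ} {G : Y → ℝ}

/-- The part of `G` lying in the `m`-th exponential layer. -/
def levelPart (G : Y → ℝ) (m : ℕ) (y : Y) : ℝ := if expLevel (G y) = m then G y else 0

lemma abs_levelPart_le_exp (G : Y → ℝ) (m : ℕ) (y : Y) : |levelPart G m y| ≤ Real.exp m := by
  unfold levelPart
  split_ifs with h
  · exact h ▸ abs_le_exp_expLevel (G y)
  · simpa using Real.exp_nonneg m

variable [Fintype Y]

lemma sum_levelPart (G : Y → ℝ) :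
    ∑ m ∈ Finset.univ.image (expLevel ∘ G), levelPart G m = G := by
  funext y
  simp [levelPart]

lemma sum_pow_mul_abs_levelPart (b : ℕ) (G : Y → ℝ) (y : Y) :
    ∑ m ∈ Finset.univ.image (expLevel ∘ G), (m : ℝ) ^ b * |levelPart G m y| =
      (expLevel (G y) : ℝ) ^ b * |G y| := by
  rw [Finset.sum_eq_single_of_mem (expLevel (G y))
    (Finset.mem_image_of_mem (expLevel ∘ G) (Finset.mem_univ y))
    fun m _ hm => by simp [levelPart, hm.symm]]
  simp [levelPart]

lemma expect_abs_mulVec_le_sum_levelPart (K : Matrix Y Y ℝ) (G : Y → ℝ) :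
    𝔼 y, |(K *ᵥ G) y| ≤
      ∑ m ∈ Finset.univ.image (expLevel ∘ G), 𝔼 y, |(K *ᵥ levelPart G m) y| := by
  rw [← Finset.expect_sum_comm]
  gcongr with y
  conv_lhs => rw [← sum_levelPart G, Matrix.mulVec_sum, Finset.sum_apply]
  exact Finset.abs_sum_le_sum_abs _ _

variable [Nonempty Y]

lemma sum_expect_pow_mul_abs_levelPart_le (b : ℕ) (G : Y → ℝ) :
    ∑ m ∈ Finset.univ.image (expLevel ∘ G), 𝔼 y, (m : ℝ) ^ b * |levelPart G m y| ≤
      6 ^ b * (1 + 𝔼 y, |G y| * Real.log (1 + |G y|) ^ b) :=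
  calc ∑ m ∈ Finset.univ.image (expLevel ∘ G), 𝔼 y, (m : ℝ) ^ b * |levelPart G m y|
      = 𝔼 y, (expLevel (G y) : ℝ) ^ b * |G y| := by
        simp only [← Finset.expect_sum_comm, sum_pow_mul_abs_levelPart]
    _ ≤ 𝔼 y, 6 ^ b * (1 + |G y| * Real.log (1 + |G y|) ^ b) :=
        Finset.expect_le_expect fun y _ => expLevel_pow_mul_abs_le b (G y)
    _ = 6 ^ b * (1 + 𝔼 y, |G y| * Real.log (1 + |G y|) ^ b) := by
        rw [← Finset.mul_expect, Finset.expect_add_distrib, Fintype.expect_const]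

lemma LpBound.expect_abs_rpow_le {p : ℝ} (hp : 1 ≤ p) (hK : LpBound p A K) (G : Y → ℝ) :
    (𝔼 y, |(K *ᵥ G) y|) ^ p ≤ A ^ p * 𝔼 y, |G y| ^ p := by
  have hmean := Real.rpow_arith_mean_le_arith_mean_rpow Finset.univ
    (fun _ : Y => (Fintype.card Y : ℝ)⁻¹) (fun y => |(K *ᵥ G) y|)
    (fun _ _ => by positivity) (by simp) (fun _ _ => abs_nonneg _) hp
  simp only [Fintype.expect_eq_sum_div_card, div_eq_inv_mul]
  rw [← Finset.mul_sum, ← Finset.mul_sum] at hmean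
  calc ((Fintype.card Y : ℝ)⁻¹ * ∑ y, |(K *ᵥ G) y|) ^ p
      ≤ (Fintype.card Y : ℝ)⁻¹ * ∑ y, |(K *ᵥ G) y| ^ p := hmean
    _ ≤ (Fintype.card Y : ℝ)⁻¹ * (A ^ p * ∑ y, |G y| ^ p) := by
        gcongr
        exact hK G
    _ = A ^ p * ((Fintype.card Y : ℝ)⁻¹ * ∑ y, |G y| ^ p) := mul_left_comm _ _ _

lemma exp_natCast_rpow_inv {m : ℕ} (hm : m ≠ 0) : Real.exp m ^ (m : ℝ)⁻¹ = Real.exp 1 := by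
  rw [← Real.exp_mul, mul_inv_cancel₀ (Nat.cast_ne_zero.mpr hm)]

lemma rpow_one_add_inv_le {m : ℕ} {u : ℝ} (hm : m ≠ 0) (hu : |u| ≤ Real.exp m) :
    |u| ^ (1 + (m : ℝ)⁻¹) ≤ Real.exp 1 * |u| := by
  rw [Real.rpow_one_add' (abs_nonneg u) (by positivity), mul_comm, ← exp_natCast_rpow_inv hm]
  gcongr

lemma le_rpow_one_add_inv {m : ℕ} {u : ℝ} (hm : m ≠ 0) (hu : 0 ≤ u) :
    u ≤ (Real.exp 1 * u + Real.exp (-m)) ^ (1 + (m : ℝ)⁻¹) := by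
  have hexp : Real.exp (-m) ^ (m : ℝ)⁻¹ = (Real.exp 1)⁻¹ := by
    rw [Real.exp_neg, Real.inv_rpow (Real.exp_nonneg _), exp_natCast_rpow_inv hm]
  rw [Real.rpow_one_add' (by positivity) (by positivity)]
  calc u = (Real.exp 1 * u) * Real.exp (-m) ^ (m : ℝ)⁻¹ := by
        rw [hexp]
        field_simp
    _ ≤ (Real.exp 1 * u + Real.exp (-m)) *
          (Real.exp 1 * u + Real.exp (-m)) ^ (m : ℝ)⁻¹ := by
        gcongr
        · exact le_add_of_nonneg_right (Real.exp_nonneg _)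
        · exact le_add_of_nonneg_left (by positivity)

lemma LpBound.expect_abs_le {m : ℕ} (hm : m ≠ 0) (hA : 0 ≤ A)
    (hK : LpBound (1 + (m : ℝ)⁻¹) A K) (hG : ∀ y, |G y| ≤ Real.exp m) :
    𝔼 y, |(K *ᵥ G) y| ≤ A * (Real.exp 1 * (Real.exp 1 * 𝔼 y, |G y| + Real.exp (-m))) := by
  have hp : 1 ≤ 1 + (m : ℝ)⁻¹ := le_add_of_nonneg_right (by positivity)
  have hmean : 0 ≤ 𝔼 y, |G y| := Finset.expect_nonneg fun _ _ => abs_nonneg _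
  rw [← Real.rpow_le_rpow_iff (Finset.expect_nonneg fun _ _ => abs_nonneg _) (by positivity)
    (by linarith : 0 < 1 + (m : ℝ)⁻¹)]
  calc (𝔼 y, |(K *ᵥ G) y|) ^ (1 + (m : ℝ)⁻¹)
      ≤ A ^ (1 + (m : ℝ)⁻¹) * 𝔼 y, |G y| ^ (1 + (m : ℝ)⁻¹) := hK.expect_abs_rpow_le hp G
    _ ≤ A ^ (1 + (m : ℝ)⁻¹) * (Real.exp 1 * 𝔼 y, |G y|) := by
        rw [Finset.mul_expect _ _ (Real.exp 1)]
        exact mul_le_mul_of_nonneg_left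
          (Finset.expect_le_expect fun y _ => rpow_one_add_inv_le hm (hG y)) (by positivity)
    _ ≤ A ^ (1 + (m : ℝ)⁻¹) * (Real.exp 1 ^ (1 + (m : ℝ)⁻¹) *
          (Real.exp 1 * 𝔼 y, |G y| + Real.exp (-m)) ^ (1 + (m : ℝ)⁻¹)) := by
        gcongr
        · exact Real.self_le_rpow_of_one_le (Real.one_le_exp zero_le_one) hp
        · exact le_rpow_one_add_inv hm hmean
    _ = (A * (Real.exp 1 * (Real.exp 1 * 𝔼 y, |G y| + Real.exp (-m)))) ^ (1 + (m : ℝ)⁻¹) := by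
        rw [Real.mul_rpow hA (by positivity), Real.mul_rpow (by positivity) (by positivity)]

lemma summable_pow_mul_exp_neg (b : ℕ) : Summable fun m : ℕ => (m : ℝ) ^ b * Real.exp (-m) :=
  Real.summable_pow_mul_exp_neg_nat_mul b zero_lt_one |>.congr fun m => by ring_nf

/-- The constant of the extrapolation theorem for operators whose `ℓ^p` norms grow like
`(p - 1)^(-b)` as `p ↓ 1`. -/
def yanoConst (b : ℕ) : ℝ :=
  Real.exp 1 ^ 2 * 6 ^ b + Real.exp 1 * ∑' m : ℕ, (m : ℝ) ^ b * Real.exp (-m)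

lemma yanoConst_pos (b : ℕ) : 0 < yanoConst b :=
  add_pos_of_pos_of_nonneg (by positivity)
    (mul_nonneg (Real.exp_nonneg 1) (tsum_nonneg fun _ => by positivity))

lemma LpBound.expect_abs_levelPart_le {b : ℕ} (hA : 0 ≤ A)
    (hK : ∀ p : ℝ, 1 < p → p < 2 → LpBound p (A / (p - 1) ^ b) K) {m : ℕ} (hm : 2 ≤ m) :
    𝔼 y, |(K *ᵥ levelPart G m) y| ≤
      A * (Real.exp 1 ^ 2 * 𝔼 y, (m : ℝ) ^ b * |levelPart G m y| +
        Real.exp 1 * ((m : ℝ) ^ b * Real.exp (-m))) := by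
  have hm0 : m ≠ 0 := by omega
  have hm2 : (m : ℝ)⁻¹ < 1 := inv_lt_one_of_one_lt₀ (by exact_mod_cast hm)
  have hKm := hK (1 + (m : ℝ)⁻¹) (lt_add_of_pos_right 1 (by positivity)) (by linarith)
  rw [add_sub_cancel_left, inv_pow, div_inv_eq_mul] at hKm
  refine (hKm.expect_abs_le hm0 (by positivity) (abs_levelPart_le_exp G m)).trans_eq ?_
  rw [← Finset.mul_expect]
  ring

/-- Yano's extrapolation theorem on a finite probability space: apply the `ℓ^p` bound with
`p = 1 + 1 / m` to the layer where `|G|` is of size about `e^m`. -/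
theorem LpBound.expect_abs_le_yanoConst {b : ℕ} (hA : 0 ≤ A)
    (hK : ∀ p : ℝ, 1 < p → p < 2 → LpBound p (A / (p - 1) ^ b) K) (G : Y → ℝ) :
    𝔼 y, |(K *ᵥ G) y| ≤ A * yanoConst b * (1 + 𝔼 y, |G y| * Real.log (1 + |G y|) ^ b) := by
  let S := Finset.univ.image (expLevel ∘ G)
  have hseries : ∑ m ∈ S, (m : ℝ) ^ b * Real.exp (-m) ≤
      ∑' m : ℕ, (m : ℝ) ^ b * Real.exp (-m) :=
    (summable_pow_mul_exp_neg b).sum_le_tsum S fun _ _ => by positivity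
  have hexpect : 0 ≤ 𝔼 y, |G y| * Real.log (1 + |G y|) ^ b := Finset.expect_nonneg fun y _ =>
    mul_nonneg (abs_nonneg _) (pow_nonneg (log_one_add_abs_nonneg _) b)
  have htsum : 0 ≤ ∑' m : ℕ, (m : ℝ) ^ b * Real.exp (-m) := tsum_nonneg fun _ => by positivity
  calc 𝔼 y, |(K *ᵥ G) y|
      ≤ ∑ m ∈ S, A * (Real.exp 1 ^ 2 * 𝔼 y, (m : ℝ) ^ b * |levelPart G m y| +
          Real.exp 1 * ((m : ℝ) ^ b * Real.exp (-m))) := by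
        refine (expect_abs_mulVec_le_sum_levelPart K G).trans (Finset.sum_le_sum fun m hm => ?_)
        obtain ⟨y, -, rfl⟩ := Finset.mem_image.mp hm
        exact LpBound.expect_abs_levelPart_le hA hK (two_le_expLevel _)
    _ = A * (Real.exp 1 ^ 2 * ∑ m ∈ S, 𝔼 y, (m : ℝ) ^ b * |levelPart G m y| +
          Real.exp 1 * ∑ m ∈ S, (m : ℝ) ^ b * Real.exp (-m)) := by
        rw [← Finset.mul_sum, Finset.sum_add_distrib, ← Finset.mul_sum, ← Finset.mul_sum]
    _ ≤ A * (Real.exp 1 ^ 2 * (6 ^ b * (1 + 𝔼 y, |G y| * Real.log (1 + |G y|) ^ b)) +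
          Real.exp 1 * ((∑' m : ℕ, (m : ℝ) ^ b * Real.exp (-m)) *
            (1 + 𝔼 y, |G y| * Real.log (1 + |G y|) ^ b))) := by
        gcongr
        · exact sum_expect_pow_mul_abs_levelPart_le b G
        · exact hseries.trans (le_mul_of_one_le_right htsum (by linarith))
    _ = A * yanoConst b * (1 + 𝔼 y, |G y| * Real.log (1 + |G y|) ^ b) := by
        rw [yanoConst]
        ring

end Yano

/-! ### Walsh functions on dyadic cells -/

section DiscreteWalsh

/-- The value of the `k`-th Walsh function on the `a`-th dyadic interval of length `2^(-M)`,
where only the binary digits of `k` below `M` are taken into account. -/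
def discreteWalsh : ℕ → ℕ → ℕ → ℝ
  | 0, _, _ => 1
  | M + 1, k, a => (if k.testBit M then (-1) ^ a else 1) * discreteWalsh M k (a / 2)

variable {M N k a b : ℕ}

lemma discreteWalsh_mul_self (M k a : ℕ) : discreteWalsh M k a * discreteWalsh M k a = 1 := by
  induction M generalizing a with
  | zero => exact mul_one 1
  | succ M ih =>
    rw [discreteWalsh, mul_mul_mul_comm, ih, mul_one]
    split_ifs
    · rw [← mul_pow, neg_one_mul, neg_neg, one_pow]
    · exact mul_one 1

lemma abs_discreteWalsh (M k a : ℕ) : |discreteWalsh M k a| = 1 :=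
  abs_eq_abs.mpr (mul_self_eq_one_iff.mp (discreteWalsh_mul_self M k a)) |>.trans abs_one

lemma discreteWalsh_congr {k' : ℕ} (h : ∀ s < M, k.testBit s = k'.testBit s) (a : ℕ) :
    discreteWalsh M k a = discreteWalsh M k' a := by
  induction M generalizing a with
  | zero => rfl
  | succ M ih =>
    rw [discreteWalsh, discreteWalsh, h M M.lt_succ_self,
      ih fun s hs => h s (hs.trans M.lt_succ_self)]

lemma discreteWalsh_succ_of_lt (hk : k < 2 ^ M) (a : ℕ) :
    discreteWalsh (M + 1) k a = discreteWalsh M k (a / 2) := by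
  simp [discreteWalsh, Nat.testBit_lt_two_pow hk]

lemma discreteWalsh_succ_two_pow_add (hk : k < 2 ^ M) (a : ℕ) :
    discreteWalsh (M + 1) (2 ^ M + k) a = (-1) ^ a * discreteWalsh M k (a / 2) := by
  have hbit : (2 ^ M + k).testBit M = true := by
    rw [Nat.testBit_two_pow_add_eq, Nat.testBit_lt_two_pow hk, Bool.not_false]
  rw [discreteWalsh, if_pos hbit,
    discreteWalsh_congr fun s hs => Nat.testBit_two_pow_add_gt hs k]

/-- The kernel of the `N`-th Walsh partial sum on the dyadic intervals of length `2^(-M)`. -/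
def discreteDirichlet (M N a b : ℕ) : ℝ :=
  ∑ k ∈ Finset.range N, discreteWalsh M k a * discreteWalsh M k b

lemma discreteDirichlet_comm (M N a b : ℕ) :
    discreteDirichlet M N a b = discreteDirichlet M N b a :=
  Finset.sum_congr rfl fun _ _ => mul_comm _ _

lemma discreteDirichlet_succ_of_le (hN : N ≤ 2 ^ M) (a b : ℕ) :
    discreteDirichlet (M + 1) N a b = discreteDirichlet M N (a / 2) (b / 2) :=
  Finset.sum_congr rfl fun k hk => by
    have hkM : k < 2 ^ M := (Finset.mem_range.mp hk).trans_le hN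
    rw [discreteWalsh_succ_of_lt hkM, discreteWalsh_succ_of_lt hkM]

lemma discreteDirichlet_succ_two_pow_add (hN : N ≤ 2 ^ M) (a b : ℕ) :
    discreteDirichlet (M + 1) (2 ^ M + N) a b =
      discreteDirichlet M (2 ^ M) (a / 2) (b / 2) +
        (-1) ^ (a + b) * discreteDirichlet M N (a / 2) (b / 2) := by
  rw [← discreteDirichlet_succ_of_le le_rfl a b]
  unfold discreteDirichlet
  rw [Finset.sum_range_add, Finset.mul_sum]
  congr 1
  refine Finset.sum_congr rfl fun k hk => ?_
  have hkM : k < 2 ^ M := (Finset.mem_range.mp hk).trans_le hN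
  rw [discreteWalsh_succ_two_pow_add hkM, discreteWalsh_succ_two_pow_add hkM, pow_add]
  ring

lemma discreteDirichlet_two_pow (ha : a < 2 ^ M) (hb : b < 2 ^ M) :
    discreteDirichlet M (2 ^ M) a b = if a = b then 2 ^ M else 0 := by
  induction M generalizing a b with
  | zero =>
    obtain rfl : a = 0 := by simpa using ha
    obtain rfl : b = 0 := by simpa using hb
    simp [discreteDirichlet, discreteWalsh]
  | succ M ih =>
    have htwo : 2 ^ (M + 1) = 2 ^ M + 2 ^ M := by ring
    rw [htwo, discreteDirichlet_succ_two_pow_add le_rfl, ih (by omega) (by omega)]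
    rcases eq_or_ne a b with rfl | hab
    · rw [if_pos rfl, if_pos rfl, Even.neg_one_pow ⟨a, rfl⟩]
      ring
    rw [if_neg hab]
    split_ifs with hhalf
    · have hodd : Odd (a + b) := by
        rw [Nat.odd_iff]
        omega
      rw [hodd.neg_one_pow]
      ring
    · ring

lemma sum_range_two_mul (m : ℕ) (g : ℕ → ℝ) :
    ∑ a ∈ Finset.range (2 * m), g a = ∑ a ∈ Finset.range m, (g (2 * a) + g (2 * a + 1)) := by
  induction m with
  | zero => rfl
  | succ m ih =>
    rw [Finset.sum_range_succ, ← ih, Nat.mul_succ, Finset.sum_range_succ, Finset.sum_range_succ,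
      add_assoc]

lemma two_mul_add_one_div_two (b : ℕ) : (2 * b + 1) / 2 = b := by omega

end DiscreteWalsh

/-! ### Partial sums as martingale transforms -/

section PartialSum

variable {M N a b : ℕ}

/-- The conditional expectation of `φ` given the pairs of adjacent cells. -/
def pairMean (φ : ℕ → ℝ) (b : ℕ) : ℝ := (φ (2 * b) + φ (2 * b + 1)) / 2

/-- The martingale difference of `φ` with respect to the pairs of adjacent cells, evaluated on the
left cell of each pair. -/
def pairDiff (φ : ℕ → ℝ) (b : ℕ) : ℝ := (φ (2 * b) - φ (2 * b + 1)) / 2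

lemma pairMean_add_pairDiff (φ : ℕ → ℝ) (b : ℕ) : pairMean φ b + pairDiff φ b = φ (2 * b) := by
  rw [pairMean, pairDiff]
  ring

lemma pairMean_sub_pairDiff (φ : ℕ → ℝ) (b : ℕ) :
    pairMean φ b - pairDiff φ b = φ (2 * b + 1) := by
  rw [pairMean, pairDiff]
  ring

/-- The `N`-th Walsh partial sum of a function of the dyadic cells of level `M`. -/
def discretePartialSum (M N : ℕ) (φ : ℕ → ℝ) (a : ℕ) : ℝ :=
  (2 ^ M)⁻¹ * ∑ b ∈ Finset.range (2 ^ M), discreteDirichlet M N a b * φ b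

lemma discretePartialSum_two_pow (φ : ℕ → ℝ) (ha : a < 2 ^ M) :
    discretePartialSum M (2 ^ M) φ a = φ a := by
  rw [discretePartialSum, Finset.sum_eq_single_of_mem a (Finset.mem_range.mpr ha)]
  · rw [discreteDirichlet_two_pow ha ha, if_pos rfl, inv_mul_cancel_left₀ (by positivity)]
  · intro b hb hba
    rw [discreteDirichlet_two_pow ha (Finset.mem_range.mp hb), if_neg hba.symm, zero_mul]

lemma discretePartialSum_succ_of_le (hN : N ≤ 2 ^ M) (φ : ℕ → ℝ) (a : ℕ) :
    discretePartialSum (M + 1) N φ a = discretePartialSum M N (pairMean φ) (a / 2) := by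
  rw [discretePartialSum, discretePartialSum, pow_succ', pow_succ', sum_range_two_mul, mul_inv,
    mul_comm 2⁻¹, mul_assoc, Finset.mul_sum]
  congr 1
  refine Finset.sum_congr rfl fun b _ => ?_
  rw [discreteDirichlet_succ_of_le hN, discreteDirichlet_succ_of_le hN,
    Nat.mul_div_cancel_left b two_pos, two_mul_add_one_div_two, pairMean]
  ring

lemma discretePartialSum_succ_two_pow_add (hN : N ≤ 2 ^ M) (φ : ℕ → ℝ) (ha : a < 2 ^ (M + 1)) :
    discretePartialSum (M + 1) (2 ^ M + N) φ a =
      pairMean φ (a / 2) + (-1) ^ a * discretePartialSum M N (pairDiff φ) (a / 2) := by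
  rw [← discretePartialSum_two_pow (M := M) (pairMean φ) (by omega), discretePartialSum,
    discretePartialSum, discretePartialSum, pow_succ', pow_succ', sum_range_two_mul, mul_inv,
    mul_comm 2⁻¹, mul_assoc, mul_left_comm ((-1 : ℝ) ^ a), ← mul_add,
    Finset.mul_sum _ _ (2⁻¹ : ℝ), Finset.mul_sum _ _ ((-1 : ℝ) ^ a), ← Finset.sum_add_distrib]
  congr 1
  refine Finset.sum_congr rfl fun b _ => ?_
  rw [discreteDirichlet_succ_two_pow_add hN, discreteDirichlet_succ_two_pow_add hN,
    Nat.mul_div_cancel_left b two_pos, two_mul_add_one_div_two, pairMean, pairDiff, ← add_assoc,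
    pow_succ, pow_add, (even_two_mul b).neg_one_pow]
  ring

/-- The operator `φ ↦ w_N S_N (w_N φ)`: a martingale transform along the dyadic filtration, whose
multipliers are the binary digits of `N`. -/
def walshTransform (M N : ℕ) (φ : ℕ → ℝ) (a : ℕ) : ℝ :=
  discreteWalsh M N a * discretePartialSum M N (fun b => discreteWalsh M N b * φ b) a

lemma walshTransform_div (M N : ℕ) (φ : ℕ → ℝ) (t : ℝ) (a : ℕ) :
    walshTransform M N (fun b => φ b / t) a = walshTransform M N φ a / t := by
  simp only [walshTransform, discretePartialSum, mul_div_assoc', ← Finset.sum_div]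

lemma walshTransform_succ_of_lt (hN : N < 2 ^ M) (φ : ℕ → ℝ) (a : ℕ) :
    walshTransform (M + 1) N φ a = walshTransform M N (pairMean φ) (a / 2) := by
  have hmean : pairMean (fun b => discreteWalsh (M + 1) N b * φ b) =
      fun b => discreteWalsh M N b * pairMean φ b := by
    funext b
    simp only [pairMean, discreteWalsh_succ_of_lt hN, Nat.mul_div_cancel_left b two_pos,
      two_mul_add_one_div_two]
    ring
  rw [walshTransform, walshTransform, discretePartialSum_succ_of_le hN.le, hmean,
    discreteWalsh_succ_of_lt hN]

lemma walshTransform_succ_two_pow_add (hN : N < 2 ^ M) (φ : ℕ → ℝ) (ha : a < 2 ^ (M + 1)) :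
    walshTransform (M + 1) (2 ^ M + N) φ a =
      walshTransform M N (pairMean φ) (a / 2) + (-1) ^ a * pairDiff φ (a / 2) := by
  let ψ : ℕ → ℝ := fun b => discreteWalsh (M + 1) (2 ^ M + N) b * φ b
  have hψ (b : ℕ) : ψ b = (-1) ^ b * discreteWalsh M N (b / 2) * φ b := by
    rw [← discreteWalsh_succ_two_pow_add hN]
  have hmean (b : ℕ) : pairMean ψ b = discreteWalsh M N b * pairDiff φ b := by
    rw [pairMean, pairDiff, hψ, hψ, Nat.mul_div_cancel_left b two_pos, two_mul_add_one_div_two,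
      pow_succ, (even_two_mul b).neg_one_pow]
    ring
  have hdiff : pairDiff ψ = fun b => discreteWalsh M N b * pairMean φ b := by
    funext b
    rw [pairMean, pairDiff, hψ, hψ, Nat.mul_div_cancel_left b two_pos, two_mul_add_one_div_two,
      pow_succ, (even_two_mul b).neg_one_pow]
    ring
  have hsign : (-1 : ℝ) ^ a * (-1) ^ a = 1 := by rw [← mul_pow, neg_one_mul, neg_neg, one_pow]
  rw [walshTransform, walshTransform, discretePartialSum_succ_two_pow_add hN.le _ ha,
    discreteWalsh_succ_two_pow_add hN, hmean, hdiff]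
  linear_combination
    (-1 : ℝ) ^ a * pairDiff φ (a / 2) * discreteWalsh_mul_self M N (a / 2) +
      discreteWalsh M N (a / 2) *
        discretePartialSum M N (fun b => discreteWalsh M N b * pairMean φ b) (a / 2) * hsign

lemma exists_walshTransform_succ (hN : N < 2 ^ (M + 1)) :
    ∃ N' < 2 ^ M, ∃ ε : ℝ, |ε| ≤ 1 ∧ ∀ φ, ∀ b < 2 ^ M,
      walshTransform (M + 1) N φ (2 * b) =
        walshTransform M N' (pairMean φ) b + ε * pairDiff φ b ∧
      walshTransform (M + 1) N φ (2 * b + 1) =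
        walshTransform M N' (pairMean φ) b - ε * pairDiff φ b := by
  rw [pow_succ'] at hN
  rcases lt_or_ge N (2 ^ M) with hlow | hhigh
  · refine ⟨N, hlow, 0, by simp, fun φ b _ => ?_⟩
    simp [walshTransform_succ_of_lt hlow, two_mul_add_one_div_two]
  · obtain ⟨N', rfl⟩ := Nat.exists_eq_add_of_le hhigh
    have hN' : N' < 2 ^ M := by omega
    refine ⟨N', hN', 1, by simp, fun φ b hb => ?_⟩
    rw [walshTransform_succ_two_pow_add hN' φ (by omega),
      walshTransform_succ_two_pow_add hN' φ (by omega), Nat.mul_div_cancel_left b two_pos,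
      two_mul_add_one_div_two, pow_succ, (even_two_mul b).neg_one_pow]
    constructor <;> ring

lemma sum_weakBurkholder_walshTransform_nonpos (hN : N < 2 ^ M) (φ : ℕ → ℝ) :
    ∑ a ∈ Finset.range (2 ^ M), weakBurkholder (φ a) (walshTransform M N φ a) ≤ 0 := by
  induction M generalizing N φ with
  | zero =>
    obtain rfl : N = 0 := by simpa using hN
    simp [walshTransform, discretePartialSum, discreteDirichlet, weakBurkholder_zero_right_nonpos]
  | succ M ih =>
    obtain ⟨N', hN', ε, hε, hsucc⟩ := exists_walshTransform_succ hN
    rw [pow_succ', sum_range_two_mul]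
    calc ∑ b ∈ Finset.range (2 ^ M),
          (weakBurkholder (φ (2 * b)) (walshTransform (M + 1) N φ (2 * b)) +
            weakBurkholder (φ (2 * b + 1)) (walshTransform (M + 1) N φ (2 * b + 1)))
        ≤ ∑ b ∈ Finset.range (2 ^ M),
            2 * weakBurkholder (pairMean φ b) (walshTransform M N' (pairMean φ) b) := by
          refine Finset.sum_le_sum fun b hb => ?_
          obtain ⟨heven, hodd⟩ := hsucc φ b (Finset.mem_range.mp hb)
          rw [heven, hodd, ← pairMean_add_pairDiff φ b, ← pairMean_sub_pairDiff φ b]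
          refine weakBurkholder_zigzag _ _ ?_
          rw [abs_mul]
          exact mul_le_of_le_one_left (abs_nonneg _) hε
      _ ≤ 0 := by
          rw [← Finset.mul_sum]
          linarith [ih hN' (pairMean φ)]

/-- The matrix of the `N`-th Walsh partial sum on the dyadic cells of level `M`. -/
def partialSumMatrix (M N : ℕ) : Matrix (Fin (2 ^ M)) (Fin (2 ^ M)) ℝ :=
  .of fun a b => (2 ^ M)⁻¹ * discreteDirichlet M N a b

lemma discretePartialSum_extend (M N : ℕ) (g : Fin (2 ^ M) → ℝ) (a : Fin (2 ^ M)) :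
    discretePartialSum M N (Function.extend Fin.val g 0) a = (partialSumMatrix M N *ᵥ g) a := by
  simp only [discretePartialSum, Finset.sum_range, Fin.val_injective.extend_apply,
    partialSumMatrix, Matrix.mulVec, dotProduct, Matrix.of_apply, Finset.mul_sum, mul_assoc]

lemma sum_abs_discretePartialSum_rpow_le {p : ℝ} (hp₁ : 1 < p) (hp₂ : p < 2) (hN : N < 2 ^ M)
    (φ : ℕ → ℝ) :
    ∑ a ∈ Finset.range (2 ^ M), |discretePartialSum M N φ a| ^ p ≤
      (12 / (p - 1)) ^ p * ∑ a ∈ Finset.range (2 ^ M), |φ a| ^ p := by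
  let ψ : ℕ → ℝ := fun a => discreteWalsh M N a * φ a
  have habs (a : ℕ) : |ψ a| = |φ a| := by rw [abs_mul, abs_discreteWalsh, one_mul]
  have hcancel : (fun a => discreteWalsh M N a * ψ a) = φ := by
    funext a
    rw [← mul_assoc, discreteWalsh_mul_self, one_mul]
  have htransform (a : ℕ) : |walshTransform M N ψ a| = |discretePartialSum M N φ a| := by
    rw [walshTransform, hcancel, abs_mul, abs_discreteWalsh, one_mul]
  have hψ := sum_abs_rpow_le_of_sum_weakBurkholder_nonpos (s := Finset.range (2 ^ M)) (f := ψ)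
    (g := walshTransform M N ψ)
    (fun t _ => by
      simpa only [walshTransform_div] using
        sum_weakBurkholder_walshTransform_nonpos hN fun a => ψ a / t) hp₁ hp₂
  simpa only [habs, htransform] using hψ

theorem lpBound_partialSumMatrix {p : ℝ} (hp₁ : 1 < p) (hp₂ : p < 2) (hN : N < 2 ^ M) :
    LpBound p (12 / (p - 1)) (partialSumMatrix M N) := fun g => by
  simpa only [Finset.sum_range, discretePartialSum_extend, Fin.val_injective.extend_apply] using
    sum_abs_discretePartialSum_rpow_le hp₁ hp₂ hN (Function.extend Fin.val g 0)

end PartialSum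

/-! ### Fejér sums and logarithmic means -/

section LogMean

variable {M m n a : ℕ}

/-- The unnormalized Walsh–Fejér kernel on the dyadic cells of level `M`. -/
def fejerSum (M m a b : ℕ) : ℝ := ∑ j ∈ Finset.range m, discreteDirichlet M j a b

lemma fejerSum_succ_of_le (hm : m ≤ 2 ^ M) (a b : ℕ) :
    fejerSum (M + 1) m a b = fejerSum M m (a / 2) (b / 2) :=
  Finset.sum_congr rfl fun _ hj =>
    discreteDirichlet_succ_of_le ((Finset.mem_range.mp hj).le.trans hm) a b

lemma fejerSum_succ_two_pow_add (hm : m ≤ 2 ^ M) (a b : ℕ) :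
    fejerSum (M + 1) (2 ^ M + m) a b =
      fejerSum M (2 ^ M) (a / 2) (b / 2) + m * discreteDirichlet M (2 ^ M) (a / 2) (b / 2) +
        (-1) ^ (a + b) * fejerSum M m (a / 2) (b / 2) := by
  have hhigh (j : ℕ) (hj : j ∈ Finset.range m) :=
    discreteDirichlet_succ_two_pow_add ((Finset.mem_range.mp hj).le.trans hm) a b
  rw [← fejerSum_succ_of_le le_rfl, fejerSum, Finset.sum_range_add, ← fejerSum,
    Finset.sum_congr rfl hhigh, Finset.sum_add_distrib, Finset.sum_const, Finset.card_range,
    nsmul_eq_mul, ← Finset.mul_sum, ← fejerSum, add_assoc]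

lemma sum_abs_discreteDirichlet_two_pow (ha : a < 2 ^ M) :
    ∑ b ∈ Finset.range (2 ^ M), |discreteDirichlet M (2 ^ M) a b| = 2 ^ M := by
  rw [Finset.sum_eq_single_of_mem a (Finset.mem_range.mpr ha)]
  · rw [discreteDirichlet_two_pow ha ha, if_pos rfl, abs_of_pos (by positivity)]
  · intro b hb hba
    rw [discreteDirichlet_two_pow ha (Finset.mem_range.mp hb), if_neg hba.symm, abs_zero]

lemma sum_abs_fejerSum_succ_of_le (hm : m ≤ 2 ^ M) (a : ℕ) :
    ∑ b ∈ Finset.range (2 ^ (M + 1)), |fejerSum (M + 1) m a b| =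
      2 * ∑ b ∈ Finset.range (2 ^ M), |fejerSum M m (a / 2) b| := by
  rw [pow_succ', sum_range_two_mul, Finset.mul_sum]
  refine Finset.sum_congr rfl fun b _ => ?_
  rw [fejerSum_succ_of_le hm, fejerSum_succ_of_le hm, Nat.mul_div_cancel_left b two_pos,
    two_mul_add_one_div_two, two_mul]

lemma sum_abs_fejerSum_succ_two_pow_add (hm : m ≤ 2 ^ M) (a : ℕ) :
    ∑ b ∈ Finset.range (2 ^ (M + 1)), |fejerSum (M + 1) (2 ^ M + m) a b| =
      ∑ b ∈ Finset.range (2 ^ M),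
        (|fejerSum M (2 ^ M) (a / 2) b + m * discreteDirichlet M (2 ^ M) (a / 2) b +
            fejerSum M m (a / 2) b| +
          |fejerSum M (2 ^ M) (a / 2) b + m * discreteDirichlet M (2 ^ M) (a / 2) b -
            fejerSum M m (a / 2) b|) := by
  rw [pow_succ', sum_range_two_mul]
  refine Finset.sum_congr rfl fun b _ => ?_
  rw [fejerSum_succ_two_pow_add hm, fejerSum_succ_two_pow_add hm,
    Nat.mul_div_cancel_left b two_pos, two_mul_add_one_div_two, ← add_assoc, pow_succ, pow_add,
    (even_two_mul b).neg_one_pow]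
  rcases neg_one_pow_eq_or ℝ a with hsign | hsign
  · rw [hsign]
    ring_nf
  · rw [hsign, add_comm]
    ring_nf

lemma sum_abs_fejerSum_two_pow_le (ha : a < 2 ^ M) :
    ∑ b ∈ Finset.range (2 ^ M), |fejerSum M (2 ^ M) a b| ≤ 2 ^ M * 2 ^ M := by
  induction M generalizing a with
  | zero => simp [fejerSum, discreteDirichlet]
  | succ M ih =>
    have ha' : a / 2 < 2 ^ M := by omega
    have hpair (P Q : ℝ) : |P + 2 ^ M * Q + P| + |P + 2 ^ M * Q - P| ≤
        2 * |P| + 2 * 2 ^ M * |Q| := by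
      have habs : |2 ^ M * Q| = 2 ^ M * |Q| := by rw [abs_mul, abs_of_pos (by positivity)]
      have htriangle := abs_add_three P (2 ^ M * Q) P
      rw [add_sub_cancel_left]
      linarith
    have hrow := sum_abs_fejerSum_succ_two_pow_add (M := M) le_rfl a
    rw [← two_mul, ← pow_succ', Nat.cast_pow, Nat.cast_ofNat] at hrow
    rw [hrow]
    refine (Finset.sum_le_sum fun b _ => hpair _ _).trans ?_
    rw [Finset.sum_add_distrib, ← Finset.mul_sum, ← Finset.mul_sum,
      sum_abs_discreteDirichlet_two_pow ha', pow_succ]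
    linarith [ih ha']

lemma sum_abs_fejerSum_succ_two_pow_add_le (ha : a < 2 ^ (M + 1)) (hm : m ≤ 2 ^ M) :
    ∑ b ∈ Finset.range (2 ^ (M + 1)), |fejerSum (M + 1) (2 ^ M + m) a b| ≤
      2 * (2 ^ M * 2 ^ M) + 2 * m * 2 ^ M +
        2 * ∑ b ∈ Finset.range (2 ^ M), |fejerSum M m (a / 2) b| := by
  have ha' : a / 2 < 2 ^ M := by omega
  have hpair (P Q R : ℝ) : |P + m * Q + R| + |P + m * Q - R| ≤
      2 * |P| + 2 * m * |Q| + 2 * |R| := by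
    have habs : |m * Q| = m * |Q| := by rw [abs_mul, Nat.abs_cast]
    have hadd := abs_add_three P (m * Q) R
    have hsub := abs_add_three P (m * Q) (-R)
    rw [abs_neg, ← sub_eq_add_neg] at hsub
    linarith
  rw [sum_abs_fejerSum_succ_two_pow_add hm]
  refine (Finset.sum_le_sum fun b _ => hpair _ _ _).trans ?_
  rw [Finset.sum_add_distrib, Finset.sum_add_distrib, ← Finset.mul_sum, ← Finset.mul_sum,
    ← Finset.mul_sum, sum_abs_discreteDirichlet_two_pow ha']
  linarith [sum_abs_fejerSum_two_pow_le ha']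

lemma sum_abs_fejerSum_le (ha : a < 2 ^ M) (hm : m ≤ 2 ^ M) :
    ∑ b ∈ Finset.range (2 ^ M), |fejerSum M m a b| ≤ 2 * m * 2 ^ M := by
  induction M generalizing a m with
  | zero =>
    have hm' : m ≤ 1 := by simpa using hm
    interval_cases m <;> simp [fejerSum, discreteDirichlet]
  | succ M ih =>
    have ha' : a / 2 < 2 ^ M := by omega
    rcases le_total m (2 ^ M) with hlow | hhigh
    · rw [sum_abs_fejerSum_succ_of_le hlow, pow_succ]
      linarith [ih ha' hlow]
    · obtain ⟨m', rfl⟩ := Nat.exists_eq_add_of_le hhigh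
      have hm' : m' ≤ 2 ^ M := by omega
      have hm'M : (m' : ℝ) * 2 ^ M ≤ 2 ^ M * 2 ^ M := by
        gcongr
        exact_mod_cast hm'
      refine (sum_abs_fejerSum_succ_two_pow_add_le ha hm').trans ?_
      rw [Nat.cast_add, Nat.cast_pow, Nat.cast_ofNat, pow_succ]
      linarith [ih ha' hm']

lemma logSum_eq_sum_Ico (n : ℕ) : logSum n = ∑ i ∈ Finset.Ico 1 n, (i : ℝ)⁻¹ := by
  rw [logSum]
  refine Finset.sum_congr ?_ fun i _ => one_div _
  ext i
  simp only [Finset.mem_Icc, Finset.mem_Ico]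
  omega

lemma one_le_logSum (hn : 2 ≤ n) : 1 ≤ logSum n := by
  rw [logSum_eq_sum_Ico]
  have hone := Finset.single_le_sum (f := fun i : ℕ => (i : ℝ)⁻¹) (fun i _ => by positivity)
    (Finset.mem_Ico.mpr ⟨le_rfl, hn⟩)
  simpa using hone

lemma sum_Ico_inv_mul_eq {f : ℕ → ℝ} (hf : f 0 = 0) (n : ℕ) :
    ∑ i ∈ Finset.Ico 1 (n + 2), (i : ℝ)⁻¹ * f i =
      ((n + 1 : ℕ) : ℝ)⁻¹ * ∑ j ∈ Finset.range (n + 2), f j +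
        ∑ i ∈ Finset.Ico 1 (n + 1),
          (((i + 1 : ℕ) : ℝ) * i)⁻¹ * ∑ j ∈ Finset.range (i + 1), f j := by
  induction n with
  | zero => simp [Finset.sum_range_succ, hf]
  | succ n ih =>
    rw [Finset.sum_Ico_succ_top (by omega), ih, Finset.sum_Ico_succ_top (by omega : 1 ≤ n + 1),
      Finset.sum_range_succ f (n + 2)]
    field_simp
    push_cast
    ring

lemma abs_sum_inv_mul_discreteDirichlet_le (M n a b : ℕ) :
    |∑ i ∈ Finset.Ico 1 (n + 2), (i : ℝ)⁻¹ * discreteDirichlet M i a b| ≤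
      ((n + 1 : ℕ) : ℝ)⁻¹ * |fejerSum M (n + 2) a b| +
        ∑ i ∈ Finset.Ico 1 (n + 1), (((i + 1 : ℕ) : ℝ) * i)⁻¹ * |fejerSum M (i + 1) a b| := by
  rw [sum_Ico_inv_mul_eq (f := fun i => discreteDirichlet M i a b) (Finset.sum_range_zero _)]
  refine (abs_add_le _ _).trans (add_le_add ?_ ?_)
  · rw [abs_mul, abs_of_nonneg (by positivity), fejerSum]
  · refine (Finset.abs_sum_le_sum_abs _ _).trans_eq (Finset.sum_congr rfl fun i _ => ?_)
    rw [abs_mul, abs_of_nonneg (by positivity), fejerSum]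

lemma sum_abs_sum_inv_mul_discreteDirichlet_le (ha : a < 2 ^ M) (hn : 2 ≤ n) (hnM : n ≤ 2 ^ M) :
    ∑ b ∈ Finset.range (2 ^ M), |∑ i ∈ Finset.Ico 1 n, (i : ℝ)⁻¹ * discreteDirichlet M i a b| ≤
      6 * logSum n * 2 ^ M := by
  obtain ⟨n, rfl⟩ := Nat.exists_eq_add_of_le' hn
  have hlog := one_le_logSum hn
  have hhead : ((n + 1 : ℕ) : ℝ)⁻¹ * ∑ b ∈ Finset.range (2 ^ M), |fejerSum M (n + 2) a b| ≤
      4 * 2 ^ M := by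
    rw [inv_mul_le_iff₀ (by positivity), ← mul_assoc]
    refine (sum_abs_fejerSum_le ha hnM).trans (mul_le_mul_of_nonneg_right ?_ (by positivity))
    push_cast
    linarith [n.cast_nonneg (α := ℝ)]
  have htail (i : ℕ) (hi : i ∈ Finset.Ico 1 (n + 1)) : (((i + 1 : ℕ) : ℝ) * i)⁻¹ *
      ∑ b ∈ Finset.range (2 ^ M), |fejerSum M (i + 1) a b| ≤ 2 * 2 ^ M * (i : ℝ)⁻¹ := by
    obtain ⟨hi1, hin⟩ := Finset.mem_Ico.mp hi
    rw [inv_mul_le_iff₀ (by positivity)]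
    refine (sum_abs_fejerSum_le ha (by omega)).trans_eq ?_
    field_simp
  have htails := Finset.sum_le_sum htail
  rw [← Finset.mul_sum] at htails
  have hlogSum : ∑ i ∈ Finset.Ico 1 (n + 1), (i : ℝ)⁻¹ ≤ logSum (n + 2) := by
    rw [logSum_eq_sum_Ico]
    exact Finset.sum_le_sum_of_subset_of_nonneg (Finset.Ico_subset_Ico_right (by omega))
      fun _ _ _ => by positivity
  refine (Finset.sum_le_sum fun b _ => abs_sum_inv_mul_discreteDirichlet_le M n a b).trans ?_
  rw [Finset.sum_add_distrib, ← Finset.mul_sum, Finset.sum_comm]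
  simp only [← Finset.mul_sum]
  have hpow : (0 : ℝ) < 2 ^ M := by positivity
  nlinarith

/-- The matrix of the logarithmic mean with weights `1 / i` of the partial sums of order `σ i`,
`1 ≤ i < n`, on the dyadic cells of level `M`. The Riesz mean is `σ i = i`, the Nörlund mean is
`σ i = n - i`. -/
def logMeanMatrix (M n : ℕ) (σ : ℕ → ℕ) : Matrix (Fin (2 ^ M)) (Fin (2 ^ M)) ℝ :=
  ∑ i ∈ Finset.Ico 1 n, ((logSum n)⁻¹ * (i : ℝ)⁻¹) • partialSumMatrix M (σ i)

lemma logMeanMatrix_apply (σ : ℕ → ℕ) (a b : Fin (2 ^ M)) :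
    logMeanMatrix M n σ a b = (2 ^ M)⁻¹ * ((logSum n)⁻¹ *
      ∑ i ∈ Finset.Ico 1 n, (i : ℝ)⁻¹ * discreteDirichlet M (σ i) a b) := by
  simp only [logMeanMatrix, partialSumMatrix, Matrix.sum_apply, Matrix.smul_apply,
    Matrix.of_apply, smul_eq_mul, Finset.mul_sum]
  exact Finset.sum_congr rfl fun i _ => by ring

lemma lpBound_logMeanMatrix_sub {p : ℝ} (hp₁ : 1 < p) (hp₂ : p < 2) (hn : 2 ≤ n)
    (hnM : n ≤ 2 ^ M) : LpBound p (12 / (p - 1)) (logMeanMatrix M n fun i => n - i) := by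
  have hlog := one_le_logSum hn
  refine LpBound.sum_smul hp₁.le (fun i _ => by positivity) ?_ fun i hi => ?_
  · rw [← Finset.mul_sum, ← logSum_eq_sum_Ico, inv_mul_cancel₀ (by positivity)]
  · obtain ⟨hi1, hin⟩ := Finset.mem_Ico.mp hi
    exact lpBound_partialSumMatrix hp₁ hp₂ (show n - i < 2 ^ M by omega)

lemma lpBound_logMeanMatrix_id {p : ℝ} (hp : 1 ≤ p) (hn : 2 ≤ n) (hnM : n ≤ 2 ^ M) :
    LpBound p 6 (logMeanMatrix M n fun i => i) := by
  have hlog := one_le_logSum hn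
  have hrow (a : Fin (2 ^ M)) : ∑ b, |logMeanMatrix M n (fun i => i) a b| ≤ 6 := by
    have hsum := sum_abs_sum_inv_mul_discreteDirichlet_le a.2 hn hnM
    rw [Finset.sum_range] at hsum
    simp only [logMeanMatrix_apply, abs_mul, ← Finset.mul_sum]
    rw [abs_of_pos (by positivity), abs_of_pos (by positivity), inv_mul_le_iff₀ (by positivity),
      inv_mul_le_iff₀ (by positivity)]
    linarith
  have hsymm (a b : Fin (2 ^ M)) :
      logMeanMatrix M n (fun i => i) a b = logMeanMatrix M n (fun i => i) b a := by
    simp only [logMeanMatrix_apply, discreteDirichlet_comm M _ a b]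
  refine LpBound.of_sum_abs_le hp (by norm_num) hrow fun b => ?_
  simpa only [hsymm] using hrow b

end LogMean

/-! ### Averages over the fibres of a uniformly distributed map -/

section FiberAverage

open scoped BigOperators
open ProbabilityTheory (uniformOn)

variable {Ω Y : Type*} [MeasurableSpace Ω] {μ : Measure Ω} {c : Ω → Y} {f : Ω → ℝ}

/-- The conditional expectation of `f` given `c`, as a function on the codomain of `c`. -/
def fiberAverage (μ : Measure Ω) (c : Ω → Y) (f : Ω → ℝ) (y : Y) : ℝ := ⨍ x in c ⁻¹' {y}, f x ∂μ

variable [MeasurableSpace Y] [MeasurableSingletonClass Y]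

lemma fiberAverage_comp_mul (hc : Measurable c) (h : Y → ℝ) (f : Ω → ℝ) (y : Y) :
    fiberAverage μ c (fun x => h (c x) * f x) y = h y * fiberAverage μ c f y := by
  have hconst : ∫ x in c ⁻¹' {y}, h (c x) * f x ∂μ = ∫ x in c ⁻¹' {y}, h y * f x ∂μ :=
    setIntegral_congr_fun (hc (measurableSet_singleton y)) fun x (hx : c x = y) => by
      simp only [hx]
  rw [fiberAverage, fiberAverage, setAverage_eq, setAverage_eq, hconst, integral_const_mul,
    smul_eq_mul, smul_eq_mul, mul_left_comm]

variable [Fintype Y] [Nonempty Y]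

lemma uniformOn_univ_singleton (y : Y) :
    uniformOn Set.univ {y} = ENNReal.ofReal (Fintype.card Y : ℝ)⁻¹ := by
  rw [ProbabilityTheory.uniformOn_univ, Measure.count_singleton, one_div,
    ENNReal.ofReal_inv_of_pos (by positivity), ENNReal.ofReal_natCast]

lemma measure_fiber (hc : MeasurePreserving c μ (uniformOn Set.univ)) (y : Y) :
    μ (c ⁻¹' {y}) = ENNReal.ofReal (Fintype.card Y : ℝ)⁻¹ := by
  rw [hc.measure_preimage (measurableSet_singleton y).nullMeasurableSet, uniformOn_univ_singleton]

lemma setIntegral_fiber (hc : MeasurePreserving c μ (uniformOn Set.univ)) (f : Ω → ℝ) (y : Y) :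
    ∫ x in c ⁻¹' {y}, f x ∂μ = (Fintype.card Y : ℝ)⁻¹ * fiberAverage μ c f y := by
  rw [fiberAverage, setAverage_eq, measureReal_def, measure_fiber hc,
    ENNReal.toReal_ofReal (by positivity), inv_inv, smul_eq_mul,
    inv_mul_cancel_left₀ (by positivity)]

lemma integral_eq_expect_fiberAverage (hc : MeasurePreserving c μ (uniformOn Set.univ))
    (hf : Integrable f μ) : ∫ x, f x ∂μ = 𝔼 y, fiberAverage μ c f y := by
  have hcover : ⋃ y, c ⁻¹' {y} = Set.univ := by
    rw [← Set.preimage_iUnion, Set.iUnion_of_singleton, Set.preimage_univ]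
  rw [← setIntegral_univ, ← hcover, integral_iUnion_fintype
    (fun y => hc.measurable (measurableSet_singleton y)) (pairwise_disjoint_fiber c)
    fun _ => hf.integrableOn, Fintype.expect_eq_sum_div_card, div_eq_inv_mul, Finset.mul_sum]
  simp only [setIntegral_fiber hc]

lemma integral_comp_mul_eq_expect (hc : MeasurePreserving c μ (uniformOn Set.univ))
    (hf : Integrable f μ) (h : Y → ℝ) :
    ∫ x, h (c x) * f x ∂μ = 𝔼 y, h y * fiberAverage μ c f y := by
  have hbound (x : Ω) : ‖h (c x)‖ ≤ ∑ y, ‖h y‖ :=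
    Finset.single_le_sum (f := fun y => ‖h y‖) (fun _ _ => norm_nonneg _) (Finset.mem_univ (c x))
  have hint : Integrable (fun x => h (c x) * f x) μ :=
    hf.bdd_mul ((measurable_of_countable h).comp hc.measurable).aestronglyMeasurable
      (.of_forall hbound)
  simp only [integral_eq_expect_fiberAverage hc hint, fiberAverage_comp_mul hc.measurable]

lemma lintegral_ofReal_comp_eq_expect (hc : MeasurePreserving c μ (uniformOn Set.univ))
    {H : Y → ℝ} (hH : ∀ y, 0 ≤ H y) :
    ∫⁻ x, ENNReal.ofReal (H (c x)) ∂μ = ENNReal.ofReal (𝔼 y, H y) := by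
  rw [hc.lintegral_comp (f := fun y => ENNReal.ofReal (H y)) (measurable_of_countable _),
    lintegral_fintype, Fintype.expect_eq_sum_div_card, div_eq_mul_inv, Finset.sum_mul,
    ENNReal.ofReal_sum_of_nonneg fun y _ => mul_nonneg (hH y) (by positivity)]
  refine Finset.sum_congr rfl fun y _ => ?_
  rw [uniformOn_univ_singleton, ENNReal.ofReal_mul (hH y)]

lemma expect_convexOn_fiberAverage_le (hc : MeasurePreserving c μ (uniformOn Set.univ))
    {Φ : ℝ → ℝ} (hΦ : ConvexOn ℝ Set.univ Φ) (hf : Integrable f μ)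
    (hΦf : Integrable (fun x => Φ (f x)) μ) :
    𝔼 y, Φ (fiberAverage μ c f y) ≤ ∫ x, Φ (f x) ∂μ := by
  rw [integral_eq_expect_fiberAverage hc hΦf]
  refine Finset.expect_le_expect fun y _ => ?_
  refine hΦ.map_set_average_le (hΦ.continuousOn isOpen_univ) isClosed_univ ?_ ?_
    (.of_forall fun _ => Set.mem_univ _) hf.integrableOn hΦf.integrableOn
  · rw [measure_fiber hc]
    exact (ENNReal.ofReal_pos.mpr (by positivity)).ne'
  · rw [measure_fiber hc]
    exact ENNReal.ofReal_ne_top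

end FiberAverage

section MulLogPow

open Set

lemma hasDerivAt_mul_log_one_add_pow {x : ℝ} (hx : 0 ≤ x) (b : ℕ) :
    HasDerivAt (fun x : ℝ => x * Real.log (1 + x) ^ b)
      (Real.log (1 + x) ^ b + b * (1 - (1 + x)⁻¹) * Real.log (1 + x) ^ (b - 1)) x := by
  have hlog : HasDerivAt (fun x : ℝ => Real.log (1 + x)) (1 + x)⁻¹ x := by
    simpa using ((hasDerivAt_id x).const_add 1).log (by positivity)
  convert! (hasDerivAt_id x).mul (hlog.pow b) using 1
  rw [id_eq, Pi.pow_apply]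
  field_simp
  ring

lemma convexOn_mul_log_one_add_pow (b : ℕ) :
    ConvexOn ℝ (Ici 0) fun x : ℝ => x * Real.log (1 + x) ^ b := by
  have hderiv (x : ℝ) (hx : x ∈ Ici 0) := hasDerivAt_mul_log_one_add_pow hx b
  have hsub : interior (Ici (0 : ℝ)) ⊆ Ici 0 := interior_subset
  refine MonotoneOn.convexOn_of_deriv (convex_Ici 0)
    (fun x hx => (hderiv x hx).continuousAt.continuousWithinAt)
    (fun x hx => (hderiv x (hsub hx)).differentiableAt.differentiableWithinAt) ?_
  intro x hx y hy hxy
  have hx₀ : 0 ≤ x := hsub hx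
  have hlog : 0 ≤ Real.log (1 + x) := Real.log_nonneg (by linarith)
  have hinv : 0 ≤ 1 - (1 + y)⁻¹ := sub_nonneg.mpr (inv_le_one_of_one_le₀ (by linarith))
  rw [(hderiv x (hsub hx)).deriv, (hderiv y (hsub hy)).deriv]
  gcongr

lemma monotoneOn_mul_log_one_add_pow (b : ℕ) :
    MonotoneOn (fun x : ℝ => x * Real.log (1 + x) ^ b) (Ici 0) := by
  intro x hx y hy hxy
  have hx₀ : 0 ≤ x := hx
  have hy₀ : 0 ≤ y := hy
  have hlog : 0 ≤ Real.log (1 + x) := Real.log_nonneg (by linarith)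
  dsimp only
  gcongr

lemma convexOn_abs_mul_log_one_add_abs_pow (b : ℕ) :
    ConvexOn ℝ univ fun x : ℝ => |x| * Real.log (1 + |x|) ^ b := by
  have himage : (abs : ℝ → ℝ) '' univ = Ici 0 := by
    ext x
    exact ⟨fun ⟨y, _, hy⟩ => hy ▸ abs_nonneg y, fun hx => ⟨x, mem_univ x, abs_of_nonneg hx⟩⟩
  exact ConvexOn.comp (himage ▸ convexOn_mul_log_one_add_pow b) (convexOn_univ_norm (E := ℝ))
    (himage ▸ monotoneOn_mul_log_one_add_pow b)

end MulLogPow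

/-! ### Dyadic cells of the unit cube -/

section DyadicCells

open ProbabilityTheory (uniformOn)

variable {M d : ℕ} {x : ℝ}

/-- The index of the dyadic interval of length `2^(-M)` containing `x ∈ [0,1)`; the index is
reduced modulo `2^M` outside the unit interval. -/
def dyadicIndex (M : ℕ) (x : ℝ) : Fin (2 ^ M) := Fin.ofNat (2 ^ M) ⌊2 ^ M * x⌋₊

lemma measurable_dyadicIndex (M : ℕ) : Measurable (dyadicIndex M) :=
  (measurable_of_countable (Fin.ofNat (2 ^ M))).comp
    (Nat.measurable_floor.comp (measurable_const_mul _))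

lemma val_dyadicIndex (hx : x ∈ Set.Ico 0 1) : (dyadicIndex M x : ℕ) = ⌊2 ^ M * x⌋₊ := by
  refine Nat.mod_eq_of_lt ?_
  rw [Nat.floor_lt (mul_nonneg (by positivity) hx.1), Nat.cast_pow, Nat.cast_ofNat]
  exact mul_lt_of_lt_one_right (by positivity) hx.2

lemma preimage_dyadicIndex_inter_Ico (a : Fin (2 ^ M)) :
    dyadicIndex M ⁻¹' {a} ∩ Set.Ico 0 1 = Set.Ico ((a : ℝ) / 2 ^ M) ((a + 1) / 2 ^ M) := by
  have hM : (0 : ℝ) < 2 ^ M := by positivity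
  have ha : (a : ℝ) + 1 ≤ 2 ^ M := by exact_mod_cast a.2
  have hmem (x : ℝ) (hx : x ∈ Set.Ico (0 : ℝ) 1) :
      dyadicIndex M x = a ↔ x ∈ Set.Ico ((a : ℝ) / 2 ^ M) ((a + 1) / 2 ^ M) := by
    rw [Fin.ext_iff, val_dyadicIndex hx, Nat.floor_eq_iff (mul_nonneg hM.le hx.1), Set.mem_Ico,
      div_le_iff₀' hM, lt_div_iff₀' hM]
  have hsub : Set.Ico ((a : ℝ) / 2 ^ M) ((a + 1) / 2 ^ M) ⊆ Set.Ico 0 1 :=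
    Set.Ico_subset_Ico (by positivity) ((div_le_one hM).mpr ha)
  ext x
  exact ⟨fun ⟨hxa, hx⟩ => (hmem x hx).mp hxa, fun hx => ⟨(hmem x (hsub hx)).mpr hx, hsub hx⟩⟩

lemma measurePreserving_dyadicIndex (M : ℕ) :
    MeasurePreserving (dyadicIndex M) unitMeasure (uniformOn Set.univ) := by
  refine ⟨measurable_dyadicIndex M, Measure.ext_of_singleton fun a => ?_⟩
  have hmeas := measurable_dyadicIndex M (measurableSet_singleton a)
  rw [Measure.map_apply (measurable_dyadicIndex M) (measurableSet_singleton a), unitMeasure,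
    Measure.restrict_apply hmeas, preimage_dyadicIndex_inter_Ico, Real.volume_Ico,
    uniformOn_univ_singleton, ← sub_div, add_sub_cancel_left, Fintype.card_fin, one_div,
    Nat.cast_pow, Nat.cast_ofNat]

lemma pi_uniformOn_univ (ι Y : Type*) [Fintype ι] [Finite Y] [Nonempty Y] [MeasurableSpace Y]
    [MeasurableSingletonClass Y] :
    Measure.pi (fun _ : ι => uniformOn (Set.univ : Set Y)) = uniformOn Set.univ := by
  classical
  have := Fintype.ofFinite Y
  refine Measure.ext_of_singleton fun y => ?_
  rw [Measure.pi_singleton, uniformOn_univ_singleton, Fintype.card_fun, Nat.cast_pow, ← inv_pow,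
    ENNReal.ofReal_pow (by positivity)]
  simp only [uniformOn_univ_singleton, Finset.prod_const, Finset.card_univ]

/-- The index of the dyadic cube of side length `2^(-M)` containing `x`. -/
def cubeIndex (M : ℕ) (x : Fin d → ℝ) (j : Fin d) : Fin (2 ^ M) := dyadicIndex M (x j)

lemma measurePreserving_cubeIndex (d M : ℕ) :
    MeasurePreserving (cubeIndex M) (cubeMeasure d) (uniformOn Set.univ) := by
  rw [← pi_uniformOn_univ, cubeMeasure, unitCube, volume_pi, Measure.restrict_pi_pi]
  exact measurePreserving_pi _ _ fun _ => measurePreserving_dyadicIndex M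

lemma ae_mem_unitCube (d : ℕ) : ∀ᵐ x ∂cubeMeasure d, x ∈ unitCube d :=
  ae_restrict_mem (MeasurableSet.univ_pi fun _ => measurableSet_Ico)

end DyadicCells

/-! ### Walsh series on dyadic cells -/

section WalshSeries

open scoped BigOperators

variable {M k d : ℕ} {x : ℝ}

lemma r0_eq_neg_one_pow (hx : 0 ≤ x) : r0 x = (-1) ^ ⌊2 * x⌋₊ := by
  have hfloor : (⌊x⌋₊ : ℝ) + Int.fract x = x := by
    rw [natCast_floor_eq_intCast_floor hx, Int.floor_add_fract]
  have hnonneg := Int.fract_nonneg x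
  have hlt := Int.fract_lt_one x
  rw [r0]
  split_ifs with hhalf
  · have hfloor_two : ⌊2 * x⌋₊ = 2 * ⌊x⌋₊ := by
      rw [Nat.floor_eq_iff (by positivity)]
      push_cast
      constructor <;> linarith
    rw [hfloor_two, (even_two_mul _).neg_one_pow]
  · have hfloor_two : ⌊2 * x⌋₊ = 2 * ⌊x⌋₊ + 1 := by
      rw [Nat.floor_eq_iff (by positivity)]
      push_cast
      constructor <;> linarith
    rw [hfloor_two, (even_two_mul _).add_one.neg_one_pow]

lemma discreteWalsh_floor (M k : ℕ) (hx : 0 ≤ x) :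
    discreteWalsh M k ⌊2 ^ M * x⌋₊ =
      ∏ s ∈ Finset.range M, if k.testBit s then rademacher s x else 1 := by
  induction M with
  | zero => rfl
  | succ M ih =>
    have hhalf : ⌊2 ^ (M + 1) * x⌋₊ / 2 = ⌊2 ^ M * x⌋₊ := by
      rw [← Nat.floor_div_ofNat, pow_succ', mul_assoc, mul_div_cancel_left₀ _ two_ne_zero]
    rw [Finset.prod_range_succ, ← ih, discreteWalsh, hhalf, mul_comm, rademacher,
      r0_eq_neg_one_pow (by positivity), ← mul_assoc, ← pow_succ']

lemma walsh_eq_prod_range (hk : k < 2 ^ M) (x : ℝ) :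
    walsh k x = ∏ s ∈ Finset.range M, if k.testBit s then rademacher s x else 1 := by
  have htestBit {L s : ℕ} (hL : k < 2 ^ L) (hs : L ≤ s) : k.testBit s = false :=
    Nat.testBit_lt_two_pow (hL.trans_le (Nat.pow_le_pow_right two_pos hs))
  have hextend {L L' : ℕ} (hL : k < 2 ^ L) (hLL' : L ≤ L') :
      ∏ s ∈ Finset.range L, (if k.testBit s then rademacher s x else 1) =
        ∏ s ∈ Finset.range L', if k.testBit s then rademacher s x else 1 :=
    Finset.prod_subset (Finset.range_subset_range.mpr hLL') fun s _ hs => by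
      simp [htestBit hL (not_lt.mp (Finset.mem_range.not.mp hs))]
  have hksucc : k < 2 ^ (k + 1) := k.lt_succ_self.trans Nat.lt_two_pow_self
  rcases le_total M (k + 1) with hM | hM
  · exact (hextend hk hM).symm
  · exact hextend hksucc hM

lemma walsh_eq_discreteWalsh (hk : k < 2 ^ M) (hx : x ∈ Set.Ico 0 1) :
    walsh k x = discreteWalsh M k (dyadicIndex M x) := by
  rw [val_dyadicIndex hx, discreteWalsh_floor M k hx.1, walsh_eq_prod_range hk]

lemma prod_walsh_eq_prod_discreteWalsh {j : Fin d → ℕ} (hj : ∀ i, j i < 2 ^ M)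
    {x : Fin d → ℝ} (hx : x ∈ unitCube d) :
    ∏ i, walsh (j i) (x i) = ∏ i, discreteWalsh M (j i) (cubeIndex M x i) :=
  Finset.prod_congr rfl fun i _ => walsh_eq_discreteWalsh (hj i) (hx i (Set.mem_univ i))

variable {f : (Fin d → ℝ) → ℝ}

lemma walshCoef_eq_expect (hf : Integrable f (cubeMeasure d)) {j : Fin d → ℕ}
    (hj : ∀ i, j i < 2 ^ M) :
    walshCoef f j = 𝔼 b : Fin d → Fin (2 ^ M), (∏ i, discreteWalsh M (j i) (b i)) *
      fiberAverage (cubeMeasure d) (cubeIndex M) f b := by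
  rw [← integral_comp_mul_eq_expect (measurePreserving_cubeIndex d M) hf
    fun b => ∏ i, discreteWalsh M (j i) (b i)]
  refine integral_congr_ae ?_
  filter_upwards [ae_mem_unitCube d] with x hx
  rw [prod_walsh_eq_prod_discreteWalsh hj hx, mul_comm]

lemma tensorMatrix_partialSumMatrix_apply (N : Fin d → ℕ) (a b : Fin d → Fin (2 ^ M)) :
    tensorMatrix (fun i => partialSumMatrix M (N i)) a b =
      (Fintype.card (Fin d → Fin (2 ^ M)) : ℝ)⁻¹ *
        ∑ j ∈ Fintype.piFinset fun i => Finset.range (N i),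
          (∏ i, discreteWalsh M (j i) (a i)) * ∏ i, discreteWalsh M (j i) (b i) := by
  simp only [tensorMatrix, partialSumMatrix, discreteDirichlet, Matrix.of_apply,
    Finset.prod_mul_distrib, Finset.prod_univ_sum, Finset.prod_const, Finset.card_univ,
    Fintype.card_pi_const, Fintype.card_fin]
  push_cast
  rw [inv_pow]

lemma rectPartialSum_eq_mulVec (hf : Integrable f (cubeMeasure d)) {N : Fin d → ℕ}
    (hN : ∀ i, N i ≤ 2 ^ M) {x : Fin d → ℝ} (hx : x ∈ unitCube d) :
    rectPartialSum f N x = (tensorMatrix (fun i => partialSumMatrix M (N i)) *ᵥ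
      fiberAverage (cubeMeasure d) (cubeIndex M) f) (cubeIndex M x) := by
  have hterm (j : Fin d → ℕ) (hj : j ∈ Fintype.piFinset fun i => Finset.range (N i)) :
      walshCoef f j * ∏ i, walsh (j i) (x i) =
        ∑ b : Fin d → Fin (2 ^ M), (Fintype.card (Fin d → Fin (2 ^ M)) : ℝ)⁻¹ *
          ((∏ i, discreteWalsh M (j i) (cubeIndex M x i)) * ∏ i, discreteWalsh M (j i) (b i)) *
            fiberAverage (cubeMeasure d) (cubeIndex M) f b := by
    have hjM (i : Fin d) : j i < 2 ^ M :=
      (Finset.mem_range.mp (Fintype.mem_piFinset.mp hj i)).trans_le (hN i)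
    rw [walshCoef_eq_expect hf hjM, prod_walsh_eq_prod_discreteWalsh hjM hx,
      Fintype.expect_eq_sum_div_card, div_mul_eq_mul_div, div_eq_inv_mul, Finset.sum_mul,
      Finset.mul_sum]
    exact Finset.sum_congr rfl fun b _ => by ring
  rw [rectPartialSum, Finset.sum_congr rfl hterm, Finset.sum_comm]
  simp only [Matrix.mulVec, dotProduct, tensorMatrix_partialSumMatrix_apply, Finset.mul_sum,
    Finset.sum_mul]

/-- The matrix of the mixed logarithmic mean on the dyadic cubes of side length `2^(-M)`. -/
def mixedLogMeanMatrix (M : ℕ) (B : Finset (Fin d)) (n : Fin d → ℕ) :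
    Matrix (Fin d → Fin (2 ^ M)) (Fin d → Fin (2 ^ M)) ℝ :=
  tensorMatrix fun j => logMeanMatrix M (n j) fun i => if j ∈ B then n j - i else i

variable {B : Finset (Fin d)} {n : Fin d → ℕ}

lemma mixedLogMean_eq_mulVec (hf : Integrable f (cubeMeasure d)) (hn : ∀ j, n j ≤ 2 ^ M)
    {x : Fin d → ℝ} (hx : x ∈ unitCube d) :
    mixedLogMean B f n x = (mixedLogMeanMatrix M B n *ᵥ
      fiberAverage (cubeMeasure d) (cubeIndex M) f) (cubeIndex M x) := by
  unfold mixedLogMean mixedLogMeanMatrix logMeanMatrix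
  rw [tensorMatrix_sum_smul, Matrix.sum_mulVec, Finset.sum_apply, Finset.mul_sum]
  refine Finset.sum_congr rfl fun i hi => ?_
  have hN (j : Fin d) : (if j ∈ B then n j - i j else i j) ≤ 2 ^ M := by
    have hij := Finset.mem_Ico.mp (Fintype.mem_piFinset.mp hi j)
    have hnj := hn j
    split_ifs <;> omega
  rw [rectPartialSum_eq_mulVec hf hN hx, Matrix.smul_mulVec, Pi.smul_apply, smul_eq_mul,
    Finset.prod_mul_distrib, Finset.prod_inv_distrib, Finset.prod_inv_distrib, div_eq_mul_inv]
  ring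

lemma lintegral_abs_mixedLogMean_eq_expect (B : Finset (Fin d))
    (hf : Integrable f (cubeMeasure d)) (hn : ∀ j, n j ≤ 2 ^ M) :
    ∫⁻ x, ENNReal.ofReal |mixedLogMean B f n x| ∂(cubeMeasure d) =
      ENNReal.ofReal (𝔼 y, |(mixedLogMeanMatrix M B n *ᵥ
        fiberAverage (cubeMeasure d) (cubeIndex M) f) y|) := by
  rw [← lintegral_ofReal_comp_eq_expect (measurePreserving_cubeIndex d M) fun _ => abs_nonneg _]
  refine lintegral_congr_ae ?_
  filter_upwards [ae_mem_unitCube d] with x hx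
  rw [mixedLogMean_eq_mulVec hf hn hx]

lemma lpBound_mixedLogMeanMatrix {p : ℝ} (hp₁ : 1 < p) (hp₂ : p < 2) (hn : ∀ j, 2 ≤ n j)
    (hnM : ∀ j, n j ≤ 2 ^ M) :
    LpBound p (12 ^ d / (p - 1) ^ B.card) (mixedLogMeanMatrix M B n) := by
  have hp : 0 < p - 1 := sub_pos.mpr hp₁
  have hconst : ∏ j : Fin d, 12 * (if j ∈ B then (p - 1)⁻¹ else 1) =
      12 ^ d / (p - 1) ^ B.card := by
    rw [Finset.prod_mul_distrib, Finset.prod_ite_mem, Finset.univ_inter, Finset.prod_const,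
      Finset.prod_const, Finset.card_univ, Fintype.card_fin, inv_pow, div_eq_mul_inv]
  rw [← hconst]
  refine LpBound.tensorMatrix (fun j => ?_) fun j => ?_
  · split_ifs <;> positivity
  · by_cases hj : j ∈ B
    · simpa only [if_pos hj, div_eq_mul_inv] using lpBound_logMeanMatrix_sub hp₁ hp₂ (hn j) (hnM j)
    · simpa only [if_neg hj, mul_one] using (lpBound_logMeanMatrix_id hp₁.le (hn j) (hnM j)).mono
        (by linarith) (by norm_num) (by norm_num : (6 : ℝ) ≤ 12)

theorem lintegral_abs_mixedLogMean_le (B : Finset (Fin d)) (hf : Integrable f (cubeMeasure d))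
    (hflog : Integrable (fun x => |f x| * Real.log (1 + |f x|) ^ B.card) (cubeMeasure d))
    (hn : ∀ j, 2 ≤ n j) :
    ∫⁻ x, ENNReal.ofReal |mixedLogMean B f n x| ∂(cubeMeasure d) ≤
      ENNReal.ofReal (12 ^ d * yanoConst B.card *
        (1 + ∫ x, |f x| * Real.log (1 + |f x|) ^ B.card ∂(cubeMeasure d))) := by
  obtain ⟨M, hM⟩ : ∃ M, ∀ j, n j ≤ 2 ^ M :=
    ⟨∑ j, n j, fun j => (Finset.single_le_sum (fun _ _ => Nat.zero_le _)
      (Finset.mem_univ j)).trans Nat.lt_two_pow_self.le⟩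
  have hyano := LpBound.expect_abs_le_yanoConst (by positivity)
    (fun p hp₁ hp₂ => lpBound_mixedLogMeanMatrix (B := B) hp₁ hp₂ hn hM)
    (fiberAverage (cubeMeasure d) (cubeIndex M) f)
  have hjensen := expect_convexOn_fiberAverage_le (measurePreserving_cubeIndex d M)
    (convexOn_abs_mul_log_one_add_abs_pow B.card) hf hflog
  have hconst := yanoConst_pos B.card
  rw [lintegral_abs_mixedLogMean_eq_expect B hf hM]
  exact ENNReal.ofReal_le_ofReal (hyano.trans (by gcongr))

end WalshSeries

/-- Theorem (logest1). For nonempty `B ⊆ D`, the mixed logarithmic means map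
`L log^{|B|} L(I^d)` into `L^1(I^d)`, with a constant depending only on `d`. -/
theorem stmt0 (d : ℕ) (hd : 1 ≤ d) :
    ∃ C > (0:ℝ), ∀ B : Finset (Fin d), B.Nonempty →
      ∀ f : (Fin d → ℝ) → ℝ, Measurable f → Integrable f (cubeMeasure d) →
        Integrable (fun x => |f x| * Real.log (1 + |f x|) ^ B.card) (cubeMeasure d) →
        ∀ n : Fin d → ℕ, (∀ j, 2 ≤ n j) →
          ∫⁻ x, ENNReal.ofReal |mixedLogMean B f n x| ∂(cubeMeasure d) ≤
            ENNReal.ofReal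
              (C * (1 + ∫ x, |f x| * Real.log (1 + |f x|) ^ B.card ∂(cubeMeasure d))) := by
  have hpos : 0 < ∑ b ∈ Finset.range (d + 1), yanoConst b :=
    Finset.sum_pos (fun b _ => yanoConst_pos b) Finset.nonempty_range_add_one
  refine ⟨12 ^ d * ∑ b ∈ Finset.range (d + 1), yanoConst b, by positivity, ?_⟩
  intro B _ f _ hf hflog n hn
  refine (lintegral_abs_mixedLogMean_le B hf hflog hn).trans (ENNReal.ofReal_le_ofReal ?_)
  have hcard : B.card ∈ Finset.range (d + 1) :=
    Finset.mem_range_succ_iff.mpr (card_finset_fin_le B)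
  have hintegral : 0 ≤ ∫ x, |f x| * Real.log (1 + |f x|) ^ B.card ∂(cubeMeasure d) :=
    integral_nonneg fun x =>
      mul_nonneg (abs_nonneg _) (pow_nonneg (log_one_add_abs_nonneg _) _)
  gcongr
  exact Finset.single_le_sum (fun b _ => (yanoConst_pos b).le) hcard

end
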